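/- Let N(t) = #{(a,b,w) ∈ ℤ³ : (a²+b²)² + w² < t⁴} be the number of integer lattice points in the ball of radius t for the Cygan–Korányi norm N_{4,1}(z,w) = (|z|⁴ + w²)^{1/4} on the first Heisenberg group. Then limsup_{t→∞} (N(t) − (π²/2)t⁴)/t² = +∞ and liminf_{t→∞} (N(t) − (π²/2)t⁴)/t² = −∞. -/

import Mathlib

/-!
Counting the lattice points fibre by fibre over `z ∈ ℤ²` writes `N t` as a sum over `|z|² < t²` of
`2 * √(t⁴ - |z|⁴)` plus a rounding error `P t`. Comparing the smooth part with the total length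
`A t = ∑ 2 * √(t² - |z|²)` of the chords that the vertical lines over `ℤ²` cut from the Euclidean
ball of radius `t`, and estimating the difference by a Riesz mean of the circle problem, gives
`N t = π² / 2 * t⁴ + √2 * t * D t + P t + O(t²)` with `D t = A t - 4 * π / 3 * t³`.

By the functional equation of the theta function, the Laplace transform of `D` is
`∑ 8 * π / (s² + 4 * π² * |z|²)²` over `z ≠ 0`. Its double poles at `s = ± 2 * π * i * |z|` mean
that `D` correlates with the frequency `l` with linear growth and amplitude
`- #{z | |z|² = l²} / (2 * π * l²) ≤ 0`, whereas `P t / t` has no amplitude at any frequency.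

If the error had a one-sided bound `O(t²)`, then `K * t + K - e * (√2 * D t + P t / t) ≥ 0` for some
`K` and a sign `e`. Test this nonnegative function against the Riesz product
`∏ (1 - e * cos (2 * π * √p * t))` over a finite set of primes `p ≡ 1 mod 4`. Since the square roots
of distinct primes are linearly independent over `ℚ`, only the frequencies `0` and `± √p` contribute
and yield `√2 / (2 * π) * ∑ 1 / p ≤ K`. This is absurd, as `∑ 1 / p` diverges over these primes.
-/

open Real

/-- `N(t)`: the number of integer lattice points `(a,b,w) ∈ ℤ³` in the ball of
radius `t` for the Cygan–Korányi norm `N_{4,1}(z,w) = (|z|⁴ + w²)^{1/4}` on the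
first Heisenberg group, i.e. points with `(a² + b²)² + w² < t⁴`. -/
noncomputable def N (t : ℝ) : ℕ :=
  Set.ncard {p : ℤ × ℤ × ℤ |
    (((p.1 : ℝ) ^ 2 + (p.2.1 : ℝ) ^ 2) ^ 2 + (p.2.2 : ℝ) ^ 2) < t ^ 4}

section Primes

open ArithmeticFunction.vonMangoldt Filter Topology

variable {q : ℕ} {a : ZMod q}

theorem mul_residueClass_div_rpow_le {ε : ℝ} (hε₀ : 0 < ε) (hε₁ : ε ≤ 1) (n : ℕ) :
    ε * (residueClass a n / (n : ℝ) ^ (1 + ε)) ≤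
      (if n.Prime then 0 else residueClass a n) / n +
        if n.Prime ∧ (n : ZMod q) = a then (1 : ℝ) / n else 0 := by
  rcases n.eq_zero_or_pos with rfl | hn
  · simp
  have hn₀ : (0 : ℝ) < n := by exact_mod_cast hn
  have hpow : 1 ≤ (n : ℝ) ^ ε := one_le_rpow (by exact_mod_cast hn) hε₀.le
  have hres := residueClass_nonneg a n
  rw [rpow_add hn₀, rpow_one, ← mul_div_assoc]
  by_cases hprime : n.Prime
  · by_cases hclass : (n : ZMod q) = a
    · have hlog : ε * log n ≤ (n : ℝ) ^ ε := by
        simpa [le_div_iff₀ hε₀, mul_comm] using log_le_rpow_div hn₀.le hε₀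
      have hval : residueClass a n = log n := by
        simp [residueClass, hclass, ArithmeticFunction.vonMangoldt_apply_prime hprime]
      simp only [hprime, hclass, hval, if_true, and_self, zero_div, zero_add]
      rw [div_le_div_iff₀ (by positivity) hn₀]
      nlinarith
    · simp [residueClass, hclass]
  · simp only [hprime, if_false, false_and, add_zero]
    rw [div_le_div_iff₀ (by positivity) hn₀]
    have : ε * residueClass a n ≤ residueClass a n * (n : ℝ) ^ ε := by nlinarith
    nlinarith

theorem not_summable_one_div_primes_residueClass [NeZero q] (ha : IsUnit a) :
    ¬ Summable fun n : ℕ ↦ if n.Prime ∧ (n : ZMod q) = a then (1 : ℝ) / n else 0 := by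
  intro hsum
  have hsmall : Set.Ioc (0 : ℝ) 1 ∈ 𝓝[>] (0 : ℝ) := Ioc_mem_nhdsGT one_pos
  have hzero : Tendsto (fun ε : ℝ ↦ ∑' n : ℕ, ε * (residueClass a n / (n : ℝ) ^ (1 + ε)))
      (𝓝[>] 0) (𝓝 (∑' _ : ℕ, 0)) := by
    refine tendsto_tsum_of_dominated_convergence
      ((summable_residueClass_non_primes_div a).add hsum) (fun n ↦ ?_) ?_
    · rcases n.eq_zero_or_pos with rfl | hn
      · simp
      have hn₀ : (n : ℝ) ≠ 0 := by exact_mod_cast hn.ne'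
      have hcont : ContinuousAt (fun ε : ℝ ↦ ε * (residueClass a n / (n : ℝ) ^ (1 + ε))) 0 :=
        continuousAt_id.mul (continuousAt_const.div
          (continuousAt_const.rpow (by fun_prop) (Or.inl hn₀)) (by simp [hn.ne']))
      simpa using hcont.tendsto.mono_left nhdsWithin_le_nhds
    · filter_upwards [hsmall] with ε hε n
      have := residueClass_nonneg a n
      have := hε.1
      rw [norm_of_nonneg (by positivity)]
      exact mul_residueClass_div_rpow_le hε.1 hε.2 n
  obtain ⟨C, hC⟩ := LSeries_residueClass_lower_bound ha
  have hlower : Tendsto (fun ε : ℝ ↦ (q.totient : ℝ)⁻¹ - ε * C) (𝓝[>] 0)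
      (𝓝 ((q.totient : ℝ)⁻¹ - 0 * C)) :=
    (Continuous.tendsto (by fun_prop) 0).mono_left nhdsWithin_le_nhds
  have hle := le_of_tendsto_of_tendsto hlower hzero <| by
    filter_upwards [hsmall] with ε hε
    have h := mul_le_mul_of_nonneg_left
      (hC (x := 1 + ε) ⟨by linarith [hε.1], by linarith [hε.2]⟩) hε.1.le
    rwa [add_sub_cancel_left, mul_sub, mul_div_cancel₀ _ hε.1.ne', ← tsum_mul_left] at h
  have hpos : (0 : ℝ) < (q.totient : ℝ)⁻¹ := by
    simpa using Nat.totient_pos.2 (Nat.pos_of_neZero q)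
  simp only [tsum_zero, zero_mul, sub_zero] at hle
  exact hpos.not_ge hle

theorem exists_finset_primes_residueClass_lt_sum [NeZero q] (ha : IsUnit a) (B : ℝ) :
    ∃ P : Finset ℕ, (∀ p ∈ P, p.Prime ∧ (p : ZMod q) = a) ∧ B < ∑ p ∈ P, (1 : ℝ) / p := by
  by_contra! hbdd
  refine not_summable_one_div_primes_residueClass ha
    (summable_of_sum_le (c := B) (fun n ↦ by positivity) fun u ↦ ?_)
  rw [← Finset.sum_filter]
  exact hbdd _ fun p hp ↦ (Finset.mem_filter.1 hp).2

end Primes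

section SquareRoots

open IntermediateField hiding natCast_mem

theorem exists_eq_add_mul_of_mem_adjoin_simple {k F : Type*} [Field k] [Field F] [Algebra k F]
    {x y : F} (hx : x ^ 2 ∈ (algebraMap k F).range) (hy : y ∈ k⟮x⟯) :
    ∃ a b : k, y = algebraMap k F a + algebraMap k F b * x := by
  obtain ⟨c, hc⟩ := hx
  have halg : IsAlgebraic k x := by
    refine .of_pow two_pos ?_
    rw [← hc]
    exact isAlgebraic_algebraMap c
  rw [← mem_toSubalgebra, adjoin_simple_toSubalgebra_of_isAlgebraic halg] at hy
  induction hy using Algebra.adjoin_induction with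
  | mem z hz => exact ⟨0, 1, by simp_all⟩
  | algebraMap r => exact ⟨r, 0, by simp⟩
  | add _ _ _ _ hu hv =>
    obtain ⟨⟨a, b, rfl⟩, a', b', rfl⟩ := And.intro hu hv
    exact ⟨a + a', b + b', by simp only [map_add]; ring⟩
  | mul _ _ _ _ hu hv =>
    obtain ⟨⟨a, b, rfl⟩, a', b', rfl⟩ := And.intro hu hv
    refine ⟨a * a' + b * b' * c, a * b' + b * a', ?_⟩
    simp only [map_add, map_mul, hc]
    ring

/- If `y = a + b x` with `a b ≠ 0`, then squaring gives `x ∈ k`. -/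
theorem mem_range_or_mul_mem_range_of_mem_adjoin_simple {k F : Type*} [Field k] [Field F]
    [Algebra k F] [NeZero (2 : F)] {x y : F} (hx : x ^ 2 ∈ (algebraMap k F).range)
    (hy : y ^ 2 ∈ (algebraMap k F).range) (hmem : y ∈ k⟮x⟯) :
    y ∈ (algebraMap k F).range ∨ y * x ∈ (algebraMap k F).range := by
  obtain ⟨a, b, hab⟩ := exists_eq_add_mul_of_mem_adjoin_simple hx hmem
  obtain ⟨⟨c, hc⟩, d, hd⟩ := And.intro hx hy
  by_cases hb : algebraMap k F b = 0
  · exact .inl ⟨a, by rw [hab, hb, zero_mul, add_zero]⟩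
  by_cases ha : algebraMap k F a = 0
  · exact .inr ⟨b * c, by rw [hab, ha, zero_add, map_mul, hc, mul_assoc, sq]⟩
  · have hx_eq : x = algebraMap k F ((d - a ^ 2 - b ^ 2 * c) / (2 * a * b)) := by
      simp only [map_div₀, map_sub, map_mul, map_pow, map_ofNat, hc, hd]
      rw [eq_div_iff (mul_ne_zero (mul_ne_zero two_ne_zero ha) hb), hab]
      ring
    exact .inl ⟨a + b * ((d - a ^ 2 - b ^ 2 * c) / (2 * a * b)), by
      rw [map_add, map_mul, ← hx_eq, hab]⟩

theorem exists_mul_prod_mem_range_of_mem_adjoin {k F : Type*} [Field k] [Field F] [Algebra k F]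
    [NeZero (2 : F)] {T : Finset F} {y : F} (hT : ∀ x ∈ T, x ^ 2 ∈ (algebraMap k F).range)
    (hy : y ^ 2 ∈ (algebraMap k F).range) (hmem : y ∈ adjoin k (T : Set F)) :
    ∃ S ⊆ T, y * ∏ x ∈ S, x ∈ (algebraMap k F).range := by
  classical
  induction T using Finset.induction_on generalizing y with
  | empty => exact ⟨∅, le_rfl, by simpa [mem_bot] using hmem⟩
  | insert x T hxT ih =>
    set K := adjoin k (T : Set F)
    have hK : ∀ {z}, z ∈ (algebraMap k F).range → z ∈ (algebraMap K F).range := by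
      rintro _ ⟨c, rfl⟩
      exact ⟨algebraMap k K c, rfl⟩
    have hmemK : ∀ {z}, z ∈ (algebraMap K F).range → z ∈ K := by
      rintro _ ⟨c, rfl⟩
      exact c.2
    have hxk := hT x (Finset.mem_insert_self _ _)
    replace ih {z : F} := @ih z (fun z hz ↦ hT z (Finset.mem_insert_of_mem hz))
    have hyx : y ∈ K⟮x⟯ := by
      rw [← mem_restrictScalars k]
      rwa [Finset.coe_insert, ← Set.union_singleton, ← adjoin_adjoin_left] at hmem
    obtain hyK | hyxK := mem_range_or_mul_mem_range_of_mem_adjoin_simple (hK hxk) (hK hy) hyx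
    · obtain ⟨S, hS, hSy⟩ := ih hy (hmemK hyK)
      exact ⟨S, hS.trans (Finset.subset_insert _ _), hSy⟩
    · have hyx2 : (y * x) ^ 2 ∈ (algebraMap k F).range := by
        rw [mul_pow]
        exact mul_mem hy hxk
      obtain ⟨S, hS, hSy⟩ := ih hyx2 (hmemK hyxK)
      refine ⟨insert x S, Finset.insert_subset_insert _ hS, ?_⟩
      rwa [Finset.prod_insert fun h ↦ hxT (hS h), ← mul_assoc]

theorem sqrt_prime_notMem_adjoin_sqrt_primes {P : Finset ℕ} (hP : ∀ p ∈ P, p.Prime) {r : ℕ}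
    (hr : r.Prime) (hrP : r ∉ P) :
    √(r : ℝ) ∉ adjoin ℚ ((P.image fun p : ℕ ↦ √(p : ℝ) : Finset ℝ) : Set ℝ) := by
  classical
  intro hmem
  have hsq (n : ℕ) : √(n : ℝ) ^ 2 ∈ (algebraMap ℚ ℝ).range := ⟨n, by simp⟩
  obtain ⟨S, hS, hrat⟩ := exists_mul_prod_mem_range_of_mem_adjoin
    (fun x hx ↦ by obtain ⟨p, -, rfl⟩ := Finset.mem_image.1 hx; exact hsq p) (hsq r) hmem
  obtain ⟨Q, hQ, rfl⟩ := Finset.subset_image_iff.1 hS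
  have hinj : Set.InjOn (fun p : ℕ ↦ √(p : ℝ)) Q := fun p _ p' _ h ↦ by
    simpa using (sqrt_inj (by positivity) (by positivity)).1 h
  have hprod : √(r : ℝ) * ∏ x ∈ Q.image fun p : ℕ ↦ √(p : ℝ), x = √((r * ∏ p ∈ Q, p : ℕ) : ℝ) := by
    rw [Finset.prod_image hinj]
    push_cast
    rw [sqrt_mul (by positivity), sqrt_prod _ fun p _ ↦ by positivity]
  obtain ⟨x, hx⟩ : IsSquare (r * ∏ p ∈ Q, p) := by
    by_contra hns
    rw [hprod] at hrat
    exact irrational_sqrt_natCast_iff.2 hns hrat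
  obtain ⟨y, rfl⟩ : r ∣ x := (hr.dvd_mul.1 (hx ▸ dvd_mul_right r _)).elim id id
  have hQr : r ∣ ∏ p ∈ Q, p :=
    Dvd.intro (y * y) <| .symm <| Nat.eq_of_mul_eq_mul_left hr.pos (by rw [hx]; ring)
  obtain ⟨p, hp, hrp⟩ := hr.prime.exists_mem_finset_dvd hQr
  exact hrP ((Nat.prime_dvd_prime_iff_eq hr (hP p (hQ hp))).1 hrp ▸ hQ hp)

theorem eq_zero_or_eq_zero_of_sq_sum_mul_sqrt_primes {P : Finset ℕ} (hP : ∀ p ∈ P, p.Prime)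
    {f : ℕ → ℤ} {n : ℕ} (hsq : (∑ p ∈ P, (f p : ℝ) * √(p : ℝ)) ^ 2 = n) {p q : ℕ} (hp : p ∈ P)
    (hq : q ∈ P) (hpq : p ≠ q) : f p = 0 ∨ f q = 0 := by
  classical
  by_contra! hne
  have hfp : (f p : ℝ) ≠ 0 := by exact_mod_cast hne.1
  have hfq : (f q : ℝ) ≠ 0 := by exact_mod_cast hne.2
  let K (Q : Finset ℕ) := adjoin ℚ ((Q.image fun p : ℕ ↦ √(p : ℝ) : Finset ℝ) : Set ℝ)
  have hmem (Q : Finset ℕ) : ∑ r ∈ Q, (f r : ℝ) * √(r : ℝ) ∈ K Q :=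
    sum_mem fun r hr ↦ mul_mem (intCast_mem _ _)
      (subset_adjoin _ _ (Finset.mem_coe.2 (Finset.mem_image_of_mem _ hr)))
  set c := ∑ r ∈ P.erase p, (f r : ℝ) * √(r : ℝ)
  have hcK : c ∈ K (P.erase p) := hmem _
  rw [← Finset.add_sum_erase P _ hp] at hsq
  have hss : √(p : ℝ) ^ 2 = p := sq_sqrt (by positivity)
  by_cases hc : c = 0
  · refine sqrt_prime_notMem_adjoin_sqrt_primes (P := (P.erase p).erase q)
      (fun r hr ↦ hP r (Finset.mem_of_mem_erase (Finset.mem_of_mem_erase hr))) (hP q hq)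
      (by simp) ?_
    have hsum := Finset.add_sum_erase (P.erase p) (fun r ↦ (f r : ℝ) * √(r : ℝ))
      (Finset.mem_erase.2 ⟨hpq.symm, hq⟩)
    have hq_eq : √(q : ℝ) = -(∑ r ∈ (P.erase p).erase q, (f r : ℝ) * √(r : ℝ)) / f q := by
      rw [eq_div_iff hfq]
      linarith
    rw [hq_eq]
    exact div_mem (neg_mem (hmem _)) (intCast_mem _ _)
  · refine sqrt_prime_notMem_adjoin_sqrt_primes (P := P.erase p)
      (fun r hr ↦ hP r (Finset.mem_of_mem_erase hr)) (hP p hp) (by simp) ?_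
    have hp_eq : √(p : ℝ) = (n - c ^ 2 - f p ^ 2 * p) / (2 * c * f p) := by
      rw [eq_div_iff (by positivity)]
      linear_combination hsq - (f p : ℝ) ^ 2 * hss
    rw [hp_eq]
    exact div_mem (sub_mem (sub_mem (natCast_mem _ n) (pow_mem hcK 2))
      (mul_mem (pow_mem (intCast_mem _ _) 2) (natCast_mem _ p)))
      (mul_mem (mul_mem (ofNat_mem _ 2) hcK) (intCast_mem _ _))

end SquareRoots

section Lattice

/-- The squared Euclidean norm of a point of the Gaussian lattice `ℤ × ℤ`. -/
noncomputable def sqNorm (z : ℤ × ℤ) : ℝ := (z.1 : ℝ) ^ 2 + (z.2 : ℝ) ^ 2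

theorem sqNorm_nonneg (z : ℤ × ℤ) : 0 ≤ sqNorm z := by
  unfold sqNorm
  positivity

theorem sqNorm_zero : sqNorm 0 = 0 := by simp [sqNorm]

theorem sqNorm_eq_natCast (z : ℤ × ℤ) :
    sqNorm z = ((z.1.natAbs ^ 2 + z.2.natAbs ^ 2 : ℕ) : ℝ) := by
  simp [sqNorm, Nat.cast_natAbs]

theorem one_le_sqNorm {z : ℤ × ℤ} (hz : z ≠ 0) : 1 ≤ sqNorm z := by
  rw [sqNorm_eq_natCast, Nat.one_le_cast, Nat.one_le_iff_ne_zero]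
  simp only [ne_eq, Nat.add_eq_zero_iff, pow_eq_zero_iff two_ne_zero, Int.natAbs_eq_zero]
  exact fun h ↦ hz (Prod.ext h.1 h.2)

theorem sq_norm_le_sqNorm (z : ℤ × ℤ) : ‖z‖ ^ 2 ≤ sqNorm z := by
  rcases max_choice ‖z.1‖ ‖z.2‖ with h | h <;>
    rw [Prod.norm_def, h, sqNorm, Int.norm_eq_abs, sq_abs] <;> nlinarith

theorem finite_setOf_sqNorm_le (X : ℝ) : {z : ℤ × ℤ | sqNorm z ≤ X}.Finite :=
  (isCompact_closedBall (0 : ℤ × ℤ) √X).finite_of_discrete.subset fun z hz ↦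
    mem_closedBall_zero_iff.2 (Real.le_sqrt_of_sq_le ((sq_norm_le_sqNorm z).trans hz))

theorem summable_sqNorm_rpow {p : ℝ} (hp : 1 < p) :
    Summable fun z : ℤ × ℤ ↦ sqNorm z ^ (-p) := by
  have hnorm : Summable fun z : ℤ × ℤ ↦ ‖z‖ ^ (-(2 * p)) := by
    have h := EisensteinSeries.summable_one_div_norm_rpow (k := 2 * p) (by linarith)
    rw [← (finTwoArrowEquiv ℤ).symm.summable_iff] at h
    refine h.congr fun z ↦ ?_
    simp [EisensteinSeries.norm_eq_max_natAbs, Prod.norm_def, Int.norm_eq_abs]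
  refine Summable.of_nonneg_of_le (fun z ↦ rpow_nonneg (sqNorm_nonneg z) _) (fun z ↦ ?_) hnorm
  rcases eq_or_ne z 0 with rfl | hz
  · simp [sqNorm_zero, zero_rpow (by linarith : -p ≠ 0), zero_rpow (by linarith : -(2 * p) ≠ 0)]
  · rw [← mul_neg, rpow_mul (norm_nonneg z), rpow_two]
    exact rpow_le_rpow_of_nonpos (by positivity) (sq_norm_le_sqNorm z) (by linarith)

end Lattice

section Theta

theorem summable_exp_neg_mul_int_sq {a : ℝ} (ha : 0 < a) :
    Summable fun n : ℤ ↦ exp (-(a * (n : ℝ) ^ 2)) := by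
  have h := (hasSum_jacobiTheta₂_term 0 (τ := (a / π : ℝ) * Complex.I)
    (by simpa using div_pos ha pi_pos)).summable.norm
  refine h.congr fun n ↦ ?_
  rw [norm_jacobiTheta₂_term]
  simp
  field_simp

theorem tsum_ofReal_exp_neg_mul_int_sq {a : ℝ} (ha : 0 < a) :
    ∑' n : ℤ, ENNReal.ofReal (exp (-(a * (n : ℝ) ^ 2))) =
      ENNReal.ofReal √(π / a) * ∑' n : ℤ, ENNReal.ofReal (exp (-(π ^ 2 / a * (n : ℝ) ^ 2))) := by
  rw [← ENNReal.ofReal_tsum_of_nonneg (fun n ↦ by positivity) (summable_exp_neg_mul_int_sq ha),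
    ← ENNReal.ofReal_tsum_of_nonneg (fun n ↦ by positivity)
      (summable_exp_neg_mul_int_sq (by positivity)), ← ENNReal.ofReal_mul (by positivity)]
  congr 1
  have h := Real.tsum_exp_neg_mul_int_sq (a := a / π) (by positivity)
  have hleft (n : ℤ) : -π * (a / π) * (n : ℝ) ^ 2 = -(a * (n : ℝ) ^ 2) := by field_simp
  have hright (n : ℤ) : -π / (a / π) * (n : ℝ) ^ 2 = -(π ^ 2 / a * (n : ℝ) ^ 2) := by field_simp
  simp only [hleft, hright] at h
  rw [h, ← sqrt_eq_rpow, one_div, ← sqrt_inv, inv_div]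

theorem tsum_ofReal_exp_neg_mul_sqNorm_eq_sq (b : ℝ) :
    ∑' z : ℤ × ℤ, ENNReal.ofReal (exp (-(b * sqNorm z))) =
      (∑' n : ℤ, ENNReal.ofReal (exp (-(b * (n : ℝ) ^ 2)))) ^ 2 := by
  rw [ENNReal.tsum_prod', sq, ← ENNReal.tsum_mul_right]
  refine tsum_congr fun m ↦ ?_
  rw [← ENNReal.tsum_mul_left]
  refine tsum_congr fun n ↦ ?_
  rw [← ENNReal.ofReal_mul (by positivity), ← exp_add, sqNorm]
  ring_nf

theorem tsum_ofReal_exp_neg_mul_sqNorm {a : ℝ} (ha : 0 < a) :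
    ∑' z : ℤ × ℤ, ENNReal.ofReal (exp (-(a * sqNorm z))) =
      ENNReal.ofReal (π / a) * ∑' z : ℤ × ℤ, ENNReal.ofReal (exp (-(π ^ 2 / a * sqNorm z))) := by
  rw [tsum_ofReal_exp_neg_mul_sqNorm_eq_sq, tsum_ofReal_exp_neg_mul_sqNorm_eq_sq,
    tsum_ofReal_exp_neg_mul_int_sq ha, mul_pow, ← ENNReal.ofReal_pow (by positivity),
    sq_sqrt (by positivity)]

end Theta

section GaussianIntegrals

open MeasureTheory Set

theorem lintegral_Ioi_pow_mul_exp_neg_mul_sq (n : ℕ) {b : ℝ} (hb : 0 < b) :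
    ∫⁻ y in Ioi (0 : ℝ), ENNReal.ofReal (y ^ n * exp (-(b * y ^ 2))) =
      ENNReal.ofReal (b ^ (-((n : ℝ) + 1) / 2) * (1 / 2) * Gamma (((n : ℝ) + 1) / 2)) := by
  have hn : (-1 : ℝ) < n := neg_one_lt_zero.trans_le n.cast_nonneg
  rw [← integral_rpow_mul_exp_neg_mul_rpow (p := 2) (q := n) two_pos hn hb,
    ofReal_integral_eq_lintegral_ofReal (integrableOn_rpow_mul_exp_neg_mul_rpow hn two_pos hb)]
  · refine setLIntegral_congr_fun measurableSet_Ioi fun y _ ↦ ?_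
    simp only [rpow_natCast, rpow_two, neg_mul]
  · refine ae_restrict_of_forall_mem measurableSet_Ioi fun y hy ↦ ?_
    have : (0 : ℝ) < y := hy
    simp only [Pi.zero_apply]
    positivity

theorem lintegral_Ioi_sq_mul_exp_neg_div_sq {w : ℝ} (hw : 0 < w) :
    ∫⁻ y in Ioi (0 : ℝ), ENNReal.ofReal (y ^ 2 * exp (-(y ^ 2 / w ^ 2))) =
      ENNReal.ofReal (√π / 4 * w ^ 3) := by
  have hGamma : Gamma (3 / 2) = √π / 2 := by
    have := Gamma_nat_add_half 1
    norm_num at this ⊢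
    exact this
  have hpow : (1 / w ^ 2) ^ (-3 / 2 : ℝ) = w ^ 3 := by
    rw [one_div, ← rpow_natCast w 2, ← rpow_neg hw.le, ← rpow_mul hw.le, ← rpow_natCast w 3]
    norm_num
  have h := lintegral_Ioi_pow_mul_exp_neg_mul_sq 2 (b := 1 / w ^ 2) (by positivity)
  norm_num at h hpow hGamma
  simp only [div_eq_inv_mul _ (w ^ 2), h, hpow, hGamma]
  ring_nf

theorem lintegral_Ioi_cube_mul_exp_neg_mul_sq {b : ℝ} (hb : 0 < b) :
    ∫⁻ y in Ioi (0 : ℝ), ENNReal.ofReal (y ^ 3 * exp (-(b * y ^ 2))) =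
      ENNReal.ofReal (1 / (2 * b ^ 2)) := by
  have h := lintegral_Ioi_pow_mul_exp_neg_mul_sq 3 hb
  norm_num at h
  rw [h]
  ring_nf

theorem image_div_Ioi {c : ℝ} (hc : 0 < c) : (fun v : ℝ ↦ c / v) '' Ioi 0 = Ioi 0 := by
  ext x
  constructor
  · rintro ⟨v, hv, rfl⟩
    exact div_pos hc hv
  · intro hx
    exact ⟨c / x, div_pos hc hx, div_div_cancel₀ hc.ne'⟩

theorem setLIntegral_Ioi_eq_setLIntegral_comp_div {c : ℝ} (hc : 0 < c) (g : ℝ → ENNReal) :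
    ∫⁻ v in Ioi (0 : ℝ), g v = ∫⁻ v in Ioi (0 : ℝ), ENNReal.ofReal (c / v ^ 2) * g (c / v) := by
  conv_lhs => rw [← image_div_Ioi hc]
  rw [lintegral_image_eq_lintegral_deriv_mul_of_antitoneOn (f' := fun v ↦ -(c / v ^ 2))
    measurableSet_Ioi]
  · simp only [neg_neg]
  · intro v hv
    have hv : (v : ℝ) ≠ 0 := (mem_Ioi.1 hv).ne'
    simpa [div_eq_mul_inv] using ((hasDerivAt_inv hv).const_mul c).hasDerivWithinAt
  · exact fun v hv w _ hvw ↦ div_le_div_of_nonneg_left hc.le hv hvw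

theorem image_mul_sub_div_Ioi {a b : ℝ} (ha : 0 < a) (hb : 0 < b) :
    (fun v : ℝ ↦ a * v - b / v) '' Ioi 0 = univ := by
  refine eq_univ_of_forall fun x ↦ ?_
  have hroot : √(x ^ 2 + 4 * a * b) ^ 2 = x ^ 2 + 4 * a * b := sq_sqrt (by positivity)
  have hlt : |x| < √(x ^ 2 + 4 * a * b) :=
    lt_sqrt_of_sq_lt (by rw [sq_abs]; linarith [mul_pos (mul_pos four_pos ha) hb])
  have hpos : 0 < x + √(x ^ 2 + 4 * a * b) := by linarith [neg_abs_le x]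
  generalize √(x ^ 2 + 4 * a * b) = r at *
  have hne := hpos.ne'
  refine ⟨(x + r) / (2 * a), div_pos hpos (by positivity), ?_⟩
  field_simp
  linear_combination hroot

-- The Cauchy–Schlömilch transformation: average `v ↦ a v - b / v` with its reflection
-- `v ↦ b / (a v)`.
theorem lintegral_eq_two_mul_setLIntegral_mul_sub_div {f : ℝ → ENNReal} (hf : Measurable f)
    (heven : ∀ x, f (-x) = f x) {a b : ℝ} (ha : 0 < a) (hb : 0 < b) :
    ∫⁻ x, f x =
      2 * ∫⁻ v in Ioi (0 : ℝ), ENNReal.ofReal (b / v ^ 2) * f (a * v - b / v) := by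
  have hreflect : ∫⁻ v in Ioi (0 : ℝ), ENNReal.ofReal a * f (a * v - b / v) =
      ∫⁻ v in Ioi (0 : ℝ), ENNReal.ofReal (b / v ^ 2) * f (a * v - b / v) := by
    rw [setLIntegral_Ioi_eq_setLIntegral_comp_div (div_pos hb ha)]
    refine setLIntegral_congr_fun measurableSet_Ioi fun v hv ↦ ?_
    have hv : (0 : ℝ) < v := hv
    rw [← mul_assoc, ← ENNReal.ofReal_mul (by positivity), ← heven (a * v - b / v)]
    congr 2
    · field_simp
    · field_simp
      ring
  rw [← setLIntegral_univ, ← image_mul_sub_div_Ioi ha hb,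
    lintegral_image_eq_lintegral_deriv_mul_of_monotoneOn (f' := fun v ↦ a + b / v ^ 2)
      measurableSet_Ioi]
  · calc ∫⁻ v in Ioi (0 : ℝ), ENNReal.ofReal (a + b / v ^ 2) * f (a * v - b / v)
      _ = ∫⁻ v in Ioi (0 : ℝ), (ENNReal.ofReal a * f (a * v - b / v) +
            ENNReal.ofReal (b / v ^ 2) * f (a * v - b / v)) := by
          congr with v
          rw [ENNReal.ofReal_add ha.le (by positivity), add_mul]
      _ = _ := by rw [lintegral_add_left (by fun_prop), hreflect, two_mul]
  · intro v hv
    have hv : (v : ℝ) ≠ 0 := (mem_Ioi.1 hv).ne'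
    simpa [div_eq_mul_inv] using
      (((hasDerivAt_id v).const_mul a).fun_sub ((hasDerivAt_inv hv).const_mul b)).hasDerivWithinAt
  · intro v hv w _ hvw
    have hv : (0 : ℝ) < v := hv
    simp only
    gcongr

theorem lintegral_subordination {s t : ℝ} (hs : 0 < s) (ht : 0 < t) :
    ∫⁻ w in Ioi (0 : ℝ), ENNReal.ofReal (t / w ^ 2 * exp (-(t ^ 2 / w ^ 2 + s ^ 2 / 4 * w ^ 2))) =
      ENNReal.ofReal (√π / 2 * exp (-(s * t))) := by
  have hgauss : ∫⁻ x : ℝ, ENNReal.ofReal (exp (-x ^ 2)) = ENNReal.ofReal √π := by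
    have h := integral_gaussian 1
    have hint := integrable_exp_neg_mul_sq one_pos
    simp only [neg_mul, one_mul, div_one] at h hint
    rw [← h, ofReal_integral_eq_lintegral_ofReal hint (.of_forall fun x ↦ (exp_pos _).le)]
  have hschlomilch := lintegral_eq_two_mul_setLIntegral_mul_sub_div
    (f := fun x ↦ ENNReal.ofReal (exp (-x ^ 2))) (by fun_prop) (by simp) (half_pos hs) ht
  have hsplit : ∀ w ∈ Ioi (0 : ℝ),
      ENNReal.ofReal (t / w ^ 2 * exp (-(t ^ 2 / w ^ 2 + s ^ 2 / 4 * w ^ 2))) =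
        ENNReal.ofReal (exp (-(s * t))) *
          (ENNReal.ofReal (t / w ^ 2) * ENNReal.ofReal (exp (-(s / 2 * w - t / w) ^ 2))) := by
    intro w hw
    have hw : w ≠ 0 := (mem_Ioi.1 hw).ne'
    rw [← ENNReal.ofReal_mul (by positivity), ← ENNReal.ofReal_mul (by positivity),
      mul_left_comm, ← exp_add]
    congr 3
    field_simp
    ring
  rw [setLIntegral_congr_fun measurableSet_Ioi hsplit, lintegral_const_mul _ (by fun_prop),
    ← ENNReal.mul_right_inj two_ne_zero ENNReal.ofNat_ne_top, mul_left_comm, ← hschlomilch, hgauss,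
    ← ENNReal.ofReal_mul (by positivity), ← ENNReal.ofReal_ofNat 2,
    ← ENNReal.ofReal_mul zero_le_two]
  ring_nf

theorem image_sqrt_sq_add_Ioi {m : ℝ} (hm : 0 ≤ m) :
    (fun y : ℝ ↦ √(y ^ 2 + m)) '' Ioi 0 = Ioi √m := by
  ext x
  constructor
  · rintro ⟨y, hy, rfl⟩
    exact sqrt_lt_sqrt hm (lt_add_of_pos_left m (pow_pos hy 2))
  · intro hx
    have hx₀ : 0 < x := (sqrt_nonneg m).trans_lt hx
    have hm_lt : m < x ^ 2 := (sqrt_lt' hx₀).1 hx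
    exact ⟨√(x ^ 2 - m), sqrt_pos.2 (by linarith), by
      simp only [sq_sqrt (sub_nonneg.2 hm_lt.le), sub_add_cancel, sqrt_sq hx₀.le]⟩

theorem lintegral_chord_mul_exp_neg_div_sq {m w : ℝ} (hm : 0 ≤ m) (hw : 0 < w) :
    ∫⁻ t in Ioi (0 : ℝ), ENNReal.ofReal (2 * √(t ^ 2 - m) * (t * exp (-(t ^ 2 / w ^ 2)))) =
      ENNReal.ofReal (√π / 2 * w ^ 3 * exp (-(m / w ^ 2))) := by
  have hsupp : (fun t ↦ ENNReal.ofReal (2 * √(t ^ 2 - m) * (t * exp (-(t ^ 2 / w ^ 2))))).support ⊆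
      Ioi √m := by
    intro t ht
    have ht : m < t ^ 2 ∧ 0 < t * exp (-(t ^ 2 / w ^ 2)) := by simpa using ht
    exact (sqrt_lt' (pos_of_mul_pos_left ht.2 (exp_pos _).le)).2 ht.1
  rw [setLIntegral_eq_of_support_subset (hsupp.trans (Ioi_subset_Ioi (sqrt_nonneg m))),
    ← setLIntegral_eq_of_support_subset hsupp, ← image_sqrt_sq_add_Ioi hm,
    lintegral_image_eq_lintegral_deriv_mul_of_monotoneOn (f' := fun y ↦ y / √(y ^ 2 + m))
      measurableSet_Ioi]
  · have hpull : ∀ y ∈ Ioi (0 : ℝ), ENNReal.ofReal (y / √(y ^ 2 + m)) * ENNReal.ofReal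
        (2 * √(√(y ^ 2 + m) ^ 2 - m) * (√(y ^ 2 + m) * exp (-(√(y ^ 2 + m) ^ 2 / w ^ 2)))) =
        ENNReal.ofReal (2 * exp (-(m / w ^ 2))) *
          ENNReal.ofReal (y ^ 2 * exp (-(y ^ 2 / w ^ 2))) := by
      intro y hy
      have hy : (0 : ℝ) < y := hy
      rw [sq_sqrt (by positivity), add_sub_cancel_right, sqrt_sq hy.le,
        ← ENNReal.ofReal_mul (by positivity), ← ENNReal.ofReal_mul (by positivity), add_div,
        neg_add, exp_add]
      congr 1
      field_simp
    rw [setLIntegral_congr_fun measurableSet_Ioi hpull, lintegral_const_mul _ (by fun_prop),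
      lintegral_Ioi_sq_mul_exp_neg_div_sq hw, ← ENNReal.ofReal_mul (by positivity)]
    ring_nf
  · intro y hy
    have hpos : y ^ 2 + m ≠ 0 := (add_pos_of_pos_of_nonneg (pow_pos hy 2) hm).ne'
    refine (((hasDerivAt_pow 2 y).add_const m).sqrt hpos).hasDerivWithinAt.congr_deriv ?_
    norm_num
    exact mul_div_mul_left _ _ two_ne_zero
  · intro y hy v _ hyv
    have hy : (0 : ℝ) < y := hy
    simp only
    gcongr

theorem lintegral_sqrt_sq_sub_mul_exp_neg_mul {m s : ℝ} (hm : 0 ≤ m) (hs : 0 < s) :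
    ∫⁻ t in Ioi (0 : ℝ), ENNReal.ofReal (2 * √(t ^ 2 - m) * exp (-(s * t))) =
      ∫⁻ w in Ioi (0 : ℝ), ENNReal.ofReal (w * exp (-(s ^ 2 / 4 * w ^ 2))) *
        ENNReal.ofReal (exp (-(m / w ^ 2))) := by
  have hsub : ∀ t ∈ Ioi (0 : ℝ), ENNReal.ofReal (2 * √(t ^ 2 - m) * exp (-(s * t))) =
      ∫⁻ w in Ioi (0 : ℝ), ENNReal.ofReal (2 / √π / w ^ 2 * exp (-(s ^ 2 / 4 * w ^ 2))) *
        ENNReal.ofReal (2 * √(t ^ 2 - m) * (t * exp (-(t ^ 2 / w ^ 2)))) := by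
    intro t ht
    have ht : (0 : ℝ) < t := ht
    have hfactor (w : ℝ) : ENNReal.ofReal (2 / √π / w ^ 2 * exp (-(s ^ 2 / 4 * w ^ 2))) *
        ENNReal.ofReal (2 * √(t ^ 2 - m) * (t * exp (-(t ^ 2 / w ^ 2)))) =
        ENNReal.ofReal (2 / √π * (2 * √(t ^ 2 - m))) *
          ENNReal.ofReal (t / w ^ 2 * exp (-(t ^ 2 / w ^ 2 + s ^ 2 / 4 * w ^ 2))) := by
      rw [← ENNReal.ofReal_mul (by positivity), ← ENNReal.ofReal_mul (by positivity), neg_add,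
        exp_add]
      ring_nf
    simp only [hfactor]
    rw [lintegral_const_mul _ (by fun_prop), lintegral_subordination hs ht,
      ← ENNReal.ofReal_mul (by positivity)]
    congr 1
    field_simp
  rw [setLIntegral_congr_fun measurableSet_Ioi hsub, lintegral_lintegral_swap]
  · refine setLIntegral_congr_fun measurableSet_Ioi fun w hw ↦ ?_
    have hw : (0 : ℝ) < w := hw
    rw [lintegral_const_mul _ (by fun_prop), lintegral_chord_mul_exp_neg_div_sq hm hw,
      ← ENNReal.ofReal_mul (by positivity), ← ENNReal.ofReal_mul (by positivity)]
    congr 1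
    field_simp
  · simp only [Function.uncurry_def]
    exact Measurable.aemeasurable (by fun_prop)

end GaussianIntegrals

section LaplaceTransform

open MeasureTheory Set Filter Topology

/-- The Laplace transform `∫₀^∞ f(t) e^{-st} dt` of a real function, at a complex argument. -/
noncomputable def laplaceTransform (f : ℝ → ℝ) (s : ℂ) : ℂ :=
  ∫ t in Ioi (0 : ℝ), (f t : ℂ) * Complex.exp (-(s * t))

/-- The Laplace integral of `f` converges absolutely on the whole right half-plane. -/
def LaplaceIntegrable (f : ℝ → ℝ) : Prop :=
  ∀ ⦃σ : ℝ⦄, 0 < σ → IntegrableOn (fun t ↦ f t * exp (-(σ * t))) (Ioi 0)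

theorem norm_cexp_neg_mul_ofReal (s : ℂ) (t : ℝ) :
    ‖Complex.exp (-(s * t))‖ = exp (-(s.re * t)) := by
  simp [Complex.norm_exp]

variable {f g : ℝ → ℝ}

theorem LaplaceIntegrable.add (hf : LaplaceIntegrable f) (hg : LaplaceIntegrable g) :
    LaplaceIntegrable fun t ↦ f t + g t :=
  fun _ hσ ↦ ((hf hσ).add (hg hσ)).congr (.of_forall fun _ ↦ (add_mul ..).symm)

theorem LaplaceIntegrable.const_mul (hf : LaplaceIntegrable f) (c : ℝ) :
    LaplaceIntegrable fun t ↦ c * f t :=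
  fun _ hσ ↦ ((hf hσ).const_mul c).congr (.of_forall fun _ ↦ (mul_assoc ..).symm)

theorem LaplaceIntegrable.integrableOn {s : ℂ} (hf : LaplaceIntegrable f) (hs : 0 < s.re) :
    IntegrableOn (fun t : ℝ ↦ (f t : ℂ) * Complex.exp (-(s * t))) (Ioi 0) := by
  have h := (hf hs).ofReal (𝕜 := ℂ) |>.mul_bdd (c := 1)
    (g := fun t : ℝ ↦ Complex.exp (-(s.im * t * Complex.I)))
    (by fun_prop) (.of_forall fun t ↦ by simp [Complex.norm_exp])
  refine h.congr (.of_forall fun t ↦ ?_)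
  simp only [RCLike.ofReal_eq_complex_ofReal, Complex.ofReal_mul, Complex.ofReal_exp]
  rw [mul_assoc, ← Complex.exp_add]
  congr 2
  nth_rw 3 [← Complex.re_add_im s]
  push_cast
  ring

theorem laplaceTransform_add {s : ℂ} (hf : LaplaceIntegrable f) (hg : LaplaceIntegrable g)
    (hs : 0 < s.re) :
    laplaceTransform (fun t ↦ f t + g t) s = laplaceTransform f s + laplaceTransform g s := by
  simp only [laplaceTransform, Complex.ofReal_add, add_mul]
  exact integral_add (hf.integrableOn hs) (hg.integrableOn hs)

theorem laplaceTransform_const_mul (c : ℝ) (f : ℝ → ℝ) (s : ℂ) :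
    laplaceTransform (fun t ↦ c * f t) s = c * laplaceTransform f s := by
  simp only [laplaceTransform, Complex.ofReal_mul, mul_assoc]
  exact integral_const_mul _ _

theorem laplaceTransform_ofReal (f : ℝ → ℝ) (σ : ℝ) :
    laplaceTransform f σ = ((∫ t in Ioi (0 : ℝ), f t * exp (-(σ * t)) : ℝ) : ℂ) := by
  rw [laplaceTransform, ← integral_complex_ofReal]
  simp

theorem LaplaceIntegrable.of_abs_le (hg : LaplaceIntegrable g) (hf : Measurable f)
    (hfg : ∀ t, 0 < t → |f t| ≤ g t) : LaplaceIntegrable f := fun σ hσ ↦ by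
  refine (hg hσ).mono' (hf.mul (by fun_prop)).aestronglyMeasurable
    (ae_restrict_of_forall_mem measurableSet_Ioi fun t ht ↦ ?_)
  rw [norm_mul, norm_of_nonneg (exp_pos _).le]
  gcongr
  exact hfg t ht

theorem hasSum_laplaceTransform {ι : Type*} [Countable ι] {f : ι → ℝ → ℝ} {c : ι → ℝ}
    (hf : ∀ i, Measurable (f i)) (hc : Summable c) (hg : LaplaceIntegrable g)
    (hfg : ∀ i t, 0 < t → |f i t| ≤ c i * g t) {s : ℂ} (hs : 0 < s.re) :
    HasSum (fun i ↦ laplaceTransform (f i) s) (laplaceTransform (fun t ↦ ∑' i, f i t) s) := by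
  refine hasSum_integral_of_dominated_convergence (fun i t ↦ c i * (g t * exp (-(s.re * t))))
    (fun i ↦ ((Complex.measurable_ofReal.comp (hf i)).mul (by fun_prop)).aestronglyMeasurable)
    (fun i ↦ ae_restrict_of_forall_mem measurableSet_Ioi fun t ht ↦ ?_)
    (.of_forall fun t ↦ hc.mul_right _) ?_
    (ae_restrict_of_forall_mem measurableSet_Ioi fun t ht ↦ ?_)
  · rw [norm_mul, Complex.norm_real, norm_cexp_neg_mul_ofReal, ← mul_assoc]
    gcongr
    exact hfg i t ht
  · simp only [tsum_mul_right]
    exact (hg hs).const_mul _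
  · have hsum : Summable fun i ↦ f i t := .of_norm_bounded (hc.mul_right _) fun i ↦ hfg i t ht
    exact (Complex.hasSum_ofReal.2 hsum.hasSum).mul_right _

theorem differentiableOn_laplaceTransform (hf : LaplaceIntegrable f) :
    DifferentiableOn ℂ (laplaceTransform f) {s | 0 < s.re} := by
  intro s (hs : 0 < s.re)
  have hU : {w : ℂ | s.re / 2 < w.re} ∈ 𝓝 s :=
    (isOpen_lt continuous_const Complex.continuous_re).mem_nhds (half_lt_self hs)
  have hderiv (t : ℝ) (w : ℂ) : HasDerivAt (fun w ↦ (f t : ℂ) * Complex.exp (-(w * t)))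
      ((f t : ℂ) * Complex.exp (-(w * t)) * -t) w := by
    simpa [mul_assoc] using (((hasDerivAt_id w).mul_const (t : ℂ)).neg.cexp).const_mul (f t : ℂ)
  have hbound (t : ℝ) (ht : t ∈ Ioi 0) (w : ℂ) (hw : s.re / 2 < w.re) :
      ‖(f t : ℂ) * Complex.exp (-(w * t)) * -t‖ ≤
        4 / s.re * ‖f t * exp (-(s.re / 4 * t))‖ := by
    have ht : 0 < t := ht
    have hdecay : exp (-(w.re * t)) ≤ exp (-(s.re / 4 * t)) * exp (-(s.re / 4 * t)) := by
      rw [← exp_add]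
      gcongr
      nlinarith
    have hlin : t ≤ 4 / s.re * exp (s.re / 4 * t) := by
      have := add_one_le_exp (s.re / 4 * t)
      rw [div_mul_eq_mul_div, le_div_iff₀ hs]
      linarith
    have hcancel : exp (s.re / 4 * t) * exp (-(s.re / 4 * t)) = 1 := by
      rw [← exp_add, add_neg_cancel, exp_zero]
    rw [norm_mul, norm_mul, norm_mul, norm_cexp_neg_mul_ofReal, norm_neg, Complex.norm_real,
      Complex.norm_real, norm_of_nonneg ht.le, norm_of_nonneg (exp_pos _).le]
    calc ‖f t‖ * exp (-(w.re * t)) * t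
        ≤ ‖f t‖ * (exp (-(s.re / 4 * t)) * exp (-(s.re / 4 * t))) *
          (4 / s.re * exp (s.re / 4 * t)) := by gcongr
      _ = 4 / s.re * (‖f t‖ * exp (-(s.re / 4 * t))) := by
          linear_combination 4 / s.re * (‖f t‖ * exp (-(s.re / 4 * t))) * hcancel
  have h := hasDerivAt_integral_of_dominated_loc_of_deriv_le hU
    (eventually_of_mem hU fun w (hw : s.re / 2 < w.re) ↦
      (hf.integrableOn ((half_pos hs).trans hw)).aestronglyMeasurable)
    (hf.integrableOn hs)
    ((hf.integrableOn hs).aestronglyMeasurable.mul (by fun_prop))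
    (ae_restrict_of_forall_mem measurableSet_Ioi hbound)
    ((hf (by positivity : 0 < s.re / 4)).norm.const_mul (4 / s.re))
    (.of_forall fun t w _ ↦ hderiv t w)
  exact h.2.differentiableAt.differentiableWithinAt

theorem eqOn_re_pos_of_forall_ofReal {F G : ℂ → ℂ} (hF : DifferentiableOn ℂ F {s | 0 < s.re})
    (hG : DifferentiableOn ℂ G {s | 0 < s.re}) (h : ∀ σ : ℝ, 0 < σ → F σ = G σ) :
    EqOn F G {s | 0 < s.re} := by
  have hU : IsOpen {s : ℂ | 0 < s.re} := isOpen_lt continuous_const Complex.continuous_re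
  refine (hF.analyticOnNhd hU).eqOn_of_preconnected_of_frequently_eq (hG.analyticOnNhd hU)
    (convex_halfSpace_re_gt 0).isPreconnected (z₀ := 1) (by simp) ?_
  have hreal : Tendsto (fun σ : ℝ ↦ (σ : ℂ)) (𝓝[>] 1) (𝓝[≠] 1) :=
    tendsto_nhdsWithin_of_tendsto_nhds_of_eventually_within _
      (tendsto_nhdsWithin_of_tendsto_nhds (Complex.continuous_ofReal.tendsto' _ _ (by simp)))
      (eventually_mem_nhdsWithin.mono fun σ (hσ : 1 < σ) ↦ by simpa using hσ.ne')
  have hright : ∀ᶠ σ : ℝ in 𝓝[>] 1, F σ = G σ :=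
    eventually_mem_nhdsWithin.mono fun σ (hσ : 1 < σ) ↦ h σ (one_pos.trans hσ)
  exact hreal.frequently hright.frequently

theorem laplaceIntegrable_pow (n : ℕ) : LaplaceIntegrable fun t ↦ t ^ n := fun σ hσ ↦ by
  have h := integrableOn_rpow_mul_exp_neg_mul_rpow (p := 1) (s := n) (b := σ)
    (neg_one_lt_zero.trans_le n.cast_nonneg) one_pos hσ
  simpa using h

theorem laplaceTransform_pow (n : ℕ) {s : ℂ} (hs : 0 < s.re) :
    laplaceTransform (fun t ↦ t ^ n) s = n.factorial / s ^ (n + 1) := by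
  refine eqOn_re_pos_of_forall_ofReal (G := fun s : ℂ ↦ n.factorial / s ^ (n + 1))
    (differentiableOn_laplaceTransform (laplaceIntegrable_pow n)) (fun s hs ↦ ?_)
    (fun σ hσ ↦ ?_) hs
  · have : s ≠ 0 := by rintro rfl; simp at hs
    exact .fun_div (by fun_prop) (by fun_prop) (pow_ne_zero _ this)
  · have h := Real.integral_rpow_mul_exp_neg_mul_Ioi (a := n + 1) (by positivity) hσ
    rw [add_sub_cancel_right] at h
    simp only [rpow_natCast] at h
    rw [laplaceTransform_ofReal, h, Real.Gamma_nat_eq_factorial, ← Nat.cast_succ, rpow_natCast,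
      one_div_pow, one_div_mul_eq_div]
    push_cast
    rfl

/-- `L l` is the amplitude of the oscillation of frequency `l` in `f`, on the scale of linear
growth: `L l = lim σ² ∫₀^∞ f(t) e^{-(σ + 2πil)t} dt` as `σ → 0⁺`, so that `f(t) = t cos(2πlt)`
has amplitude `1/2` at `± l`. -/
structure HasLaplaceAmplitude (f L : ℝ → ℝ) : Prop where
  laplaceIntegrable : LaplaceIntegrable f
  tendsto (l : ℝ) : Tendsto
    (fun σ : ℝ ↦ (σ : ℂ) ^ 2 * laplaceTransform f (σ + 2 * π * l * Complex.I)) (𝓝[>] 0) (𝓝 (L l))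

theorem re_ofReal_add_two_pi_mul_I (σ l : ℝ) : (σ + 2 * π * l * Complex.I : ℂ).re = σ := by simp

theorem norm_ofReal_add_two_pi_mul_I_le (l : ℝ) {σ : ℝ} (hσ0 : 0 < σ) (hσ1 : σ ≤ 1) :
    ‖(σ + 2 * π * l * Complex.I : ℂ)‖ ≤ 1 + 2 * π * |l| := by
  refine (norm_add_le _ _).trans ?_
  simpa [abs_of_pos pi_pos, abs_of_pos hσ0] using hσ1

theorem tendsto_sq_mul_nhdsGT_zero_of_continuousAt {F : ℝ → ℂ} (hF : ContinuousAt F 0) :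
    Tendsto (fun σ : ℝ ↦ (σ : ℂ) ^ 2 * F σ) (𝓝[>] 0) (𝓝 0) := by
  have hsq : Tendsto (fun σ : ℝ ↦ (σ : ℂ) ^ 2) (𝓝 0) (𝓝 0) :=
    (by fun_prop : Continuous fun σ : ℝ ↦ (σ : ℂ) ^ 2).tendsto' _ _ (by simp)
  simpa using (hsq.mul hF.tendsto).mono_left nhdsWithin_le_nhds

theorem HasLaplaceAmplitude.add {L M : ℝ → ℝ} (hf : HasLaplaceAmplitude f L)
    (hg : HasLaplaceAmplitude g M) :
    HasLaplaceAmplitude (fun t ↦ f t + g t) fun l ↦ L l + M l where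
  laplaceIntegrable := hf.laplaceIntegrable.add hg.laplaceIntegrable
  tendsto l := by
    push_cast
    refine ((hf.tendsto l).add (hg.tendsto l)).congr' ?_
    filter_upwards [self_mem_nhdsWithin] with σ hσ
    rw [laplaceTransform_add hf.laplaceIntegrable hg.laplaceIntegrable
      ((re_ofReal_add_two_pi_mul_I σ l).symm ▸ hσ), mul_add]

theorem HasLaplaceAmplitude.const_mul {L : ℝ → ℝ} (hf : HasLaplaceAmplitude f L) (c : ℝ) :
    HasLaplaceAmplitude (fun t ↦ c * f t) fun l ↦ c * L l where
  laplaceIntegrable := hf.laplaceIntegrable.const_mul c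
  tendsto l := by
    push_cast
    refine ((hf.tendsto l).const_mul (c : ℂ)).congr fun σ ↦ ?_
    rw [laplaceTransform_const_mul, mul_left_comm]

theorem hasLaplaceAmplitude_one : HasLaplaceAmplitude (fun _ ↦ 1) fun _ ↦ 0 where
  laplaceIntegrable := by simpa using laplaceIntegrable_pow 0
  tendsto l := by
    have hlim : Tendsto (fun σ : ℝ ↦ σ) (𝓝[>] 0) (𝓝 0) := nhdsWithin_le_nhds
    refine squeeze_zero_norm' ?_ (by simpa using hlim)
    filter_upwards [self_mem_nhdsWithin] with σ (hσ : 0 < σ)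
    have h := laplaceTransform_pow 0 (s := σ + 2 * π * l * Complex.I) (by simpa using hσ)
    have hle := Complex.re_le_norm (σ + 2 * π * l * Complex.I)
    rw [re_ofReal_add_two_pi_mul_I] at hle
    simp only [pow_zero, Nat.factorial_zero, Nat.cast_one, zero_add, pow_one] at h
    rw [h, norm_mul, norm_div, norm_one, norm_pow, Complex.norm_real, norm_of_nonneg hσ.le,
      mul_one_div, div_le_iff₀ (hσ.trans_le hle), sq]
    gcongr

theorem hasLaplaceAmplitude_id :
    HasLaplaceAmplitude (fun t ↦ t) fun l ↦ if l = 0 then 1 else 0 where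
  laplaceIntegrable := by simpa using laplaceIntegrable_pow 1
  tendsto l := by
    have htransform : ∀ᶠ σ : ℝ in 𝓝[>] 0, (σ : ℂ) ^ 2 * (1 / (σ + 2 * π * l * Complex.I) ^ 2) =
        (σ : ℂ) ^ 2 * laplaceTransform (fun t ↦ t) (σ + 2 * π * l * Complex.I) := by
      filter_upwards [self_mem_nhdsWithin] with σ (hσ : 0 < σ)
      have h := laplaceTransform_pow 1 (s := σ + 2 * π * l * Complex.I) (by simpa using hσ)
      simp only [pow_one, Nat.factorial_one, Nat.cast_one, one_add_one_eq_two] at h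
      rw [h]
    refine Tendsto.congr' htransform ?_
    rcases eq_or_ne l 0 with rfl | hl
    · refine tendsto_const_nhds.congr' ?_
      filter_upwards [self_mem_nhdsWithin] with σ (hσ : 0 < σ)
      have : (σ : ℂ) ≠ 0 := by exact_mod_cast hσ.ne'
      simp [this]
    · rw [if_neg hl, Complex.ofReal_zero]
      refine tendsto_sq_mul_nhdsGT_zero_of_continuousAt (.div (by fun_prop) (by fun_prop) ?_)
      simp [hl, pi_ne_zero]

theorem HasLaplaceAmplitude.sum_mul_nonneg {L : ℝ → ℝ} (hf : HasLaplaceAmplitude f L)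
    (hf0 : ∀ t, 0 < t → 0 ≤ f t) {ι : Type*} {S : Finset ι} {c fr : ι → ℝ} {k : ℝ → ℝ}
    (hk : ∀ t, 0 ≤ k t)
    (hexp : ∀ t, (k t : ℂ) = ∑ x ∈ S, c x * Complex.exp (-(2 * π * fr x * Complex.I * t))) :
    0 ≤ ∑ x ∈ S, c x * L (fr x) := by
  have hlim : Tendsto (fun σ : ℝ ↦ ∑ x ∈ S, (c x : ℂ) *
      ((σ : ℂ) ^ 2 * laplaceTransform f (σ + 2 * π * fr x * Complex.I))) (𝓝[>] 0)
      (𝓝 ((∑ x ∈ S, c x * L (fr x) : ℝ) : ℂ)) := by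
    push_cast
    exact tendsto_finsetSum _ fun x _ ↦ (hf.tendsto (fr x)).const_mul _
  refine ge_of_tendsto ((Complex.continuous_re.tendsto _).comp hlim) ?_
  filter_upwards [self_mem_nhdsWithin] with σ (hσ : 0 < σ)
  have hint (x : ι) := hf.laplaceIntegrable.integrableOn
    (s := σ + 2 * π * fr x * Complex.I) (by simpa using hσ)
  have hsum : ∑ x ∈ S, (c x : ℂ) *
      ((σ : ℂ) ^ 2 * laplaceTransform f (σ + 2 * π * fr x * Complex.I)) =
      ((σ ^ 2 * ∫ t in Ioi (0 : ℝ), f t * k t * exp (-(σ * t)) : ℝ) : ℂ) := by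
    push_cast
    rw [← integral_complex_ofReal]
    simp only [mul_left_comm _ ((σ : ℂ) ^ 2)]
    rw [← Finset.mul_sum]
    congr 1
    simp only [laplaceTransform, ← integral_const_mul]
    rw [← integral_finsetSum _ fun x _ ↦ (hint x).const_mul _]
    refine integral_congr_ae (.of_forall fun t ↦ ?_)
    push_cast
    simp only [hexp, Finset.mul_sum, Finset.sum_mul]
    refine Finset.sum_congr rfl fun x _ ↦ ?_
    rw [add_mul, neg_add, Complex.exp_add]
    ring
  rw [Function.comp_apply, hsum, Complex.ofReal_re]
  have := setIntegral_nonneg (μ := volume) measurableSet_Ioi fun t (ht : t ∈ Ioi (0 : ℝ)) ↦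
    mul_nonneg (mul_nonneg (hf0 t ht) (hk t)) (exp_pos (-(σ * t))).le
  positivity

end LaplaceTransform

section ChordSum

open MeasureTheory Set Filter Topology

/-- The term at `z` of the series which Poisson summation attaches to the Laplace transform of
`chordSum`. -/
noncomputable def dualTerm (s : ℂ) (z : ℤ × ℤ) : ℂ := 8 * π / (s ^ 2 + 4 * π ^ 2 * sqNorm z) ^ 2

theorem summable_inv_sqNorm_sq : Summable fun z : ℤ × ℤ ↦ (sqNorm z ^ 2)⁻¹ :=
  (summable_sqNorm_rpow one_lt_two).congr fun z ↦ by rw [rpow_neg (sqNorm_nonneg z), rpow_two]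

theorem re_mul_le_norm_mul_norm_sq_add (s : ℂ) (c : ℝ) :
    s.re * (‖s‖ ^ 2 + c) ≤ ‖s‖ * ‖s ^ 2 + c‖ := by
  have hre : (starRingEnd ℂ s * (s ^ 2 + c)).re = s.re * (‖s‖ ^ 2 + c) := by
    rw [← Complex.normSq_eq_norm_sq, Complex.normSq_apply]
    simp [sq]
    ring
  rw [← hre, ← Complex.norm_conj s, ← norm_mul]
  exact Complex.re_le_norm _

theorem ofReal_four_mul_pi_sq_mul (x : ℝ) : ((4 * π ^ 2 * x : ℝ) : ℂ) = 4 * π ^ 2 * x := by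
  push_cast
  rfl

theorem dualTerm_denom_ne_zero {s : ℂ} (hs : 0 < s.re) (z : ℤ × ℤ) :
    s ^ 2 + 4 * π ^ 2 * sqNorm z ≠ 0 := by
  intro h
  have hle := re_mul_le_norm_mul_norm_sq_add s (4 * π ^ 2 * sqNorm z)
  have hs0 : 0 < ‖s‖ := hs.trans_le (Complex.re_le_norm s)
  have hq := sqNorm_nonneg z
  rw [ofReal_four_mul_pi_sq_mul, h, norm_zero, mul_zero] at hle
  exact hle.not_gt (by positivity)

theorem norm_dualTerm_le {s : ℂ} (hs : 0 < s.re) (z : ℤ × ℤ) :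
    ‖dualTerm s z‖ ≤ 8 * π * ‖s‖ ^ 2 / (s.re ^ 2 * (‖s‖ ^ 2 + 4 * π ^ 2 * sqNorm z) ^ 2) := by
  have hle := re_mul_le_norm_mul_norm_sq_add s (4 * π ^ 2 * sqNorm z)
  have hs0 : 0 < ‖s‖ := hs.trans_le (Complex.re_le_norm s)
  have hq := sqNorm_nonneg z
  rw [ofReal_four_mul_pi_sq_mul] at hle
  rw [dualTerm, norm_div, norm_mul, norm_pow, Complex.norm_real, norm_of_nonneg pi_pos.le,
    Complex.norm_ofNat,
    div_le_div_iff₀ (pow_pos (norm_pos_iff.2 (dualTerm_denom_ne_zero hs z)) 2) (by positivity),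
    ← mul_pow, mul_assoc _ (‖s‖ ^ 2), ← mul_pow]
  gcongr

theorem inv_add_sqNorm_sq_le {a : ℝ} (ha : 0 ≤ a) {z : ℤ × ℤ} (hz : z ≠ 0) :
    ((a + 4 * π ^ 2 * sqNorm z) ^ 2)⁻¹ ≤ (sqNorm z ^ 2)⁻¹ := by
  have hq := one_le_sqNorm hz
  have hpi : 1 ≤ 4 * π ^ 2 := by nlinarith [pi_gt_three]
  gcongr
  nlinarith

theorem summable_inv_add_sqNorm_sq {a : ℝ} (ha : 0 ≤ a) :
    Summable fun z : ℤ × ℤ ↦ ((a + 4 * π ^ 2 * sqNorm z) ^ 2)⁻¹ := by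
  refine summable_inv_sqNorm_sq.of_norm_bounded_eventually ?_
  filter_upwards [(finite_singleton (0 : ℤ × ℤ)).compl_mem_cofinite] with z hz
  rw [norm_of_nonneg (by positivity)]
  exact inv_add_sqNorm_sq_le ha hz

theorem summable_dualTerm {s : ℂ} (hs : 0 < s.re) : Summable (dualTerm s) := by
  refine ((summable_inv_add_sqNorm_sq (sq_nonneg ‖s‖)).mul_left
    (8 * π * ‖s‖ ^ 2 / s.re ^ 2)).of_norm_bounded fun z ↦ (norm_dualTerm_le hs z).trans_eq ?_
  rw [← div_div, div_eq_mul_inv (_ / _)]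

theorem differentiableOn_tsum_dualTerm :
    DifferentiableOn ℂ (fun s ↦ ∑' z, dualTerm s z) {s | 0 < s.re} := by
  intro s (hs : 0 < s.re)
  have hU : IsOpen ({w : ℂ | s.re / 2 < w.re} ∩ Metric.ball 0 (‖s‖ + 1)) :=
    (isOpen_lt continuous_const Complex.continuous_re).inter Metric.isOpen_ball
  have hre {w : ℂ} (hw : w ∈ {w : ℂ | s.re / 2 < w.re} ∩ Metric.ball 0 (‖s‖ + 1)) : 0 < w.re :=
    (half_pos hs).trans hw.1
  refine ((Complex.differentiableOn_tsum_of_summable_norm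
    ((summable_inv_add_sqNorm_sq (sq_nonneg (s.re / 2))).mul_left
      (8 * π * (‖s‖ + 1) ^ 2 / (s.re / 2) ^ 2))
    (fun z w hw ↦ ?_) hU fun z w hw ↦ ?_).differentiableAt
      (hU.mem_nhds ⟨half_lt_self hs, by simp⟩)).differentiableWithinAt
  · exact .fun_div (by fun_prop) (by fun_prop) (pow_ne_zero _ (dualTerm_denom_ne_zero (hre hw) z))
  · have hw1 : s.re / 2 < w.re := hw.1
    have hw2 : ‖w‖ < ‖s‖ + 1 := mem_ball_zero_iff.1 hw.2
    have hw3 := hw1.le.trans (Complex.re_le_norm w)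
    have hq := sqNorm_nonneg z
    refine (norm_dualTerm_le (hre hw) z).trans ?_
    rw [← div_eq_mul_inv, div_div]
    gcongr

/-- The amplitude of the frequency `l` in `chordError`; at `l = 0` the convention `x / 0 = 0`
gives the correct value `0`. -/
noncomputable def chordAmplitude (l : ℝ) : ℝ :=
  -({z : ℤ × ℤ | sqNorm z = l ^ 2}.ncard / (2 * π * l ^ 2))

theorem tendsto_sq_mul_dualTerm_resonant {l : ℝ} (hl : l ≠ 0) {z : ℤ × ℤ} (hz : sqNorm z = l ^ 2) :
    Tendsto (fun σ : ℝ ↦ (σ : ℂ) ^ 2 * dualTerm (σ + 2 * π * l * Complex.I) z) (𝓝[>] 0)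
      (𝓝 ((-(1 / (2 * π * l ^ 2)) : ℝ) : ℂ)) := by
  have hcont : ContinuousAt
      (fun σ : ℝ ↦ 8 * (π : ℂ) / ((σ : ℂ) + 4 * π * l * Complex.I) ^ 2) 0 :=
    .div (by fun_prop) (by fun_prop) (by simp [pi_ne_zero, hl])
  have hvalue : 8 * (π : ℂ) / (((0 : ℝ) : ℂ) + 4 * π * l * Complex.I) ^ 2 =
      ((-(1 / (2 * π * l ^ 2)) : ℝ) : ℂ) := by
    have : (l : ℂ) ≠ 0 := by exact_mod_cast hl
    have : (π : ℂ) ≠ 0 := by exact_mod_cast pi_ne_zero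
    push_cast
    rw [zero_add, mul_pow, Complex.I_sq]
    field_simp
    norm_num
  refine (hvalue ▸ hcont.tendsto.mono_left nhdsWithin_le_nhds).congr' ?_
  filter_upwards [self_mem_nhdsWithin] with σ (hσ : 0 < σ)
  have hσ0 : (σ : ℂ) ≠ 0 := by exact_mod_cast hσ.ne'
  have hfactor : ((σ : ℂ) + 2 * π * l * Complex.I) ^ 2 + 4 * π ^ 2 * ((l ^ 2 : ℝ) : ℂ) =
      σ * (σ + 4 * π * l * Complex.I) := by
    push_cast
    linear_combination 4 * (π : ℂ) ^ 2 * l ^ 2 * Complex.I_sq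
  rw [dualTerm, hz, hfactor, mul_pow, mul_div_assoc', mul_div_mul_left _ _ (pow_ne_zero 2 hσ0)]

theorem tendsto_sq_mul_dualTerm_nonresonant {l : ℝ} {z : ℤ × ℤ} (hz : sqNorm z ≠ l ^ 2) :
    Tendsto (fun σ : ℝ ↦ (σ : ℂ) ^ 2 * dualTerm (σ + 2 * π * l * Complex.I) z) (𝓝[>] 0) (𝓝 0) := by
  refine tendsto_sq_mul_nhdsGT_zero_of_continuousAt
    (.div (by fun_prop) (by fun_prop) (pow_ne_zero 2 ?_))
  have hvalue : (((0 : ℝ) : ℂ) + 2 * π * l * Complex.I) ^ 2 + 4 * π ^ 2 * sqNorm z =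
      ((4 * π ^ 2 * (sqNorm z - l ^ 2) : ℝ) : ℂ) := by
    push_cast
    linear_combination 4 * (π : ℂ) ^ 2 * l ^ 2 * Complex.I_sq
  rw [hvalue, Complex.ofReal_ne_zero]
  exact mul_ne_zero (by positivity) (sub_ne_zero.2 hz)

theorem norm_sq_mul_dualTerm_le (l : ℝ) {σ : ℝ} (hσ0 : 0 < σ) (hσ1 : σ ≤ 1) {z : ℤ × ℤ}
    (hz : z ≠ 0) :
    ‖(σ : ℂ) ^ 2 * dualTerm (σ + 2 * π * l * Complex.I) z‖ ≤
      8 * π * (1 + 2 * π * |l|) ^ 2 * (sqNorm z ^ 2)⁻¹ := by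
  have hre := re_ofReal_add_two_pi_mul_I σ l
  have hnorm := norm_ofReal_add_two_pi_mul_I_le l hσ0 hσ1
  have hterm := norm_dualTerm_le (s := σ + 2 * π * l * Complex.I) (hre.symm ▸ hσ0) z
  have hinv := inv_add_sqNorm_sq_le (sq_nonneg ‖(σ + 2 * π * l * Complex.I : ℂ)‖) hz
  rw [hre] at hterm
  rw [norm_mul, norm_pow, Complex.norm_real, norm_of_nonneg hσ0.le]
  set ρ := ‖(σ + 2 * π * l * Complex.I : ℂ)‖
  calc σ ^ 2 * ‖dualTerm (σ + 2 * π * l * Complex.I) z‖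
      ≤ σ ^ 2 * (8 * π * ρ ^ 2 / (σ ^ 2 * (ρ ^ 2 + 4 * π ^ 2 * sqNorm z) ^ 2)) := by gcongr
    _ = 8 * π * ρ ^ 2 * ((ρ ^ 2 + 4 * π ^ 2 * sqNorm z) ^ 2)⁻¹ := by
      rw [mul_div_assoc', mul_div_mul_left _ _ (by positivity), div_eq_mul_inv]
    _ ≤ 8 * π * (1 + 2 * π * |l|) ^ 2 * (sqNorm z ^ 2)⁻¹ := by gcongr

theorem ofReal_chordAmplitude (l : ℝ) :
    (chordAmplitude l : ℂ) =
      ∑' z, if sqNorm z = l ^ 2 then ((-(1 / (2 * π * l ^ 2)) : ℝ) : ℂ) else 0 := by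
  have h := tsum_subtype {z : ℤ × ℤ | sqNorm z = l ^ 2}
    fun _ ↦ ((-(1 / (2 * π * l ^ 2)) : ℝ) : ℂ)
  simp only [indicator_apply, mem_ofPred_eq] at h
  rw [← h, tsum_const, Nat.card_coe_set_eq, chordAmplitude, nsmul_eq_mul]
  push_cast
  ring

theorem tendsto_sq_mul_tsum_dualTerm (l : ℝ) :
    Tendsto (fun σ : ℝ ↦ (σ : ℂ) ^ 2 *
      ∑' z, if z = 0 then 0 else dualTerm (σ + 2 * π * l * Complex.I) z)
      (𝓝[>] 0) (𝓝 (chordAmplitude l)) := by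
  simp only [ofReal_chordAmplitude, ← tsum_mul_left]
  refine tendsto_tsum_of_dominated_convergence
    (summable_inv_sqNorm_sq.mul_left (8 * π * (1 + 2 * π * |l|) ^ 2)) (fun z ↦ ?_) ?_
  · rcases eq_or_ne z 0 with rfl | hz0
    · rcases eq_or_ne l 0 with rfl | hl
      · simp
      · simp [sqNorm_zero, eq_comm, hl]
    simp only [if_neg hz0]
    split_ifs with hz
    · refine tendsto_sq_mul_dualTerm_resonant (fun hl ↦ ?_) hz
      have := one_le_sqNorm hz0
      norm_num [hz, hl] at this
    · exact tendsto_sq_mul_dualTerm_nonresonant hz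
  · filter_upwards [Ioo_mem_nhdsGT one_pos] with σ hσ z
    rcases eq_or_ne z 0 with rfl | hz
    · simp [sqNorm_zero]
    · rw [if_neg hz]
      exact norm_sq_mul_dualTerm_le l hσ.1 hσ.2.le hz

theorem lintegral_tsum_sqrt_sq_sub_sqNorm {s : ℝ} (hs : 0 < s) :
    ∫⁻ t in Ioi (0 : ℝ), ∑' z, ENNReal.ofReal (2 * √(t ^ 2 - sqNorm z) * exp (-(s * t))) =
      ∑' z, ENNReal.ofReal (8 * π / (s ^ 2 + 4 * π ^ 2 * sqNorm z) ^ 2) := by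
  have hpoisson : ∀ w ∈ Ioi (0 : ℝ),
      ∑' z, ENNReal.ofReal (w * exp (-(s ^ 2 / 4 * w ^ 2))) *
        ENNReal.ofReal (exp (-(sqNorm z / w ^ 2))) =
      ∑' z, ENNReal.ofReal π * ENNReal.ofReal (w ^ 3 *
        exp (-((s ^ 2 / 4 + π ^ 2 * sqNorm z) * w ^ 2))) := by
    intro w (hw : 0 < w)
    have htheta := tsum_ofReal_exp_neg_mul_sqNorm (a := 1 / w ^ 2) (by positivity)
    simp only [one_div_mul_eq_div, div_div_eq_mul_div, div_one] at htheta
    rw [ENNReal.tsum_mul_left, htheta, ← mul_assoc, ← ENNReal.tsum_mul_left]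
    refine tsum_congr fun z ↦ ?_
    rw [← ENNReal.ofReal_mul (by positivity), ← ENNReal.ofReal_mul (by positivity),
      ← ENNReal.ofReal_mul (by positivity), add_mul, neg_add, exp_add]
    ring_nf
  rw [lintegral_tsum fun z ↦ by fun_prop]
  simp only [lintegral_sqrt_sq_sub_mul_exp_neg_mul (sqNorm_nonneg _) hs]
  rw [← lintegral_tsum fun z ↦ by fun_prop, setLIntegral_congr_fun measurableSet_Ioi hpoisson,
    lintegral_tsum fun z ↦ by fun_prop]
  refine tsum_congr fun z ↦ ?_
  have hq := sqNorm_nonneg z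
  rw [lintegral_const_mul _ (by fun_prop), lintegral_Ioi_cube_mul_exp_neg_mul_sq (by positivity),
    ← ENNReal.ofReal_mul pi_pos.le]
  congr 1
  field_simp
  ring

/-- The total length of the chords that the vertical lines through the points of `ℤ²` cut out of
the Euclidean ball of radius `t` in `ℝ³`. -/
noncomputable def chordSum (t : ℝ) : ℝ := ∑' z, 2 * √(t ^ 2 - sqNorm z)

theorem summable_sqrt_sq_sub_sqNorm (t : ℝ) : Summable fun z ↦ 2 * √(t ^ 2 - sqNorm z) := by
  refine summable_of_hasFiniteSupport ((finite_setOf_sqNorm_le (t ^ 2)).subset fun z hz ↦ ?_)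
  by_contra h
  exact hz (by simp [Real.sqrt_eq_zero_of_nonpos (sub_nonpos.2 (not_le.1 h).le)])

theorem chordSum_nonneg (t : ℝ) : 0 ≤ chordSum t := tsum_nonneg fun z ↦ by positivity

theorem chordSum_le_chordSum {t u : ℝ} (ht : 0 ≤ t) (htu : t ≤ u) : chordSum t ≤ chordSum u :=
  (summable_sqrt_sq_sub_sqNorm t).tsum_le_tsum (fun z ↦ by gcongr) (summable_sqrt_sq_sub_sqNorm u)

theorem ofReal_chordSum_mul (t : ℝ) {c : ℝ} (hc : 0 ≤ c) :
    ENNReal.ofReal (chordSum t * c) = ∑' z, ENNReal.ofReal (2 * √(t ^ 2 - sqNorm z) * c) := by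
  rw [chordSum, ← tsum_mul_right, ENNReal.ofReal_tsum_of_nonneg (fun z ↦ by positivity)
    ((summable_sqrt_sq_sub_sqNorm t).mul_right c)]

theorem measurable_chordSum : Measurable chordSum := by
  have h : chordSum = fun t ↦ (∑' z, ENNReal.ofReal (2 * √(t ^ 2 - sqNorm z) * 1)).toReal := by
    ext t
    rw [← ofReal_chordSum_mul t zero_le_one, mul_one, ENNReal.toReal_ofReal (chordSum_nonneg t)]
  rw [h]
  exact (Measurable.tsum fun z ↦ by fun_prop).ennreal_toReal

theorem dualTerm_ofReal (s : ℝ) (z : ℤ × ℤ) :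
    dualTerm s z = ((8 * π / (s ^ 2 + 4 * π ^ 2 * sqNorm z) ^ 2 : ℝ) : ℂ) := by
  simp [dualTerm]

theorem lintegral_chordSum_mul_exp {s : ℝ} (hs : 0 < s) :
    ∫⁻ t in Ioi (0 : ℝ), ENNReal.ofReal (chordSum t * exp (-(s * t))) =
      ENNReal.ofReal (∑' z, 8 * π / (s ^ 2 + 4 * π ^ 2 * sqNorm z) ^ 2) := by
  have hsum := summable_dualTerm (s := s) (by simpa using hs)
  simp only [funext (dualTerm_ofReal s), Complex.summable_ofReal] at hsum
  simp only [ofReal_chordSum_mul _ (exp_pos _).le]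
  rw [lintegral_tsum_sqrt_sq_sub_sqNorm hs, ENNReal.ofReal_tsum_of_nonneg _ hsum]
  exact fun z ↦ by positivity

theorem laplaceIntegrable_chordSum : LaplaceIntegrable chordSum := fun s hs ↦ by
  refine ⟨(measurable_chordSum.mul (by fun_prop)).aestronglyMeasurable, ?_⟩
  rw [hasFiniteIntegral_iff_ofReal
    (.of_forall fun t ↦ mul_nonneg (chordSum_nonneg t) (exp_pos _).le),
    lintegral_chordSum_mul_exp hs]
  exact ENNReal.ofReal_lt_top

theorem laplaceTransform_chordSum {s : ℂ} (hs : 0 < s.re) :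
    laplaceTransform chordSum s = ∑' z, dualTerm s z := by
  refine eqOn_re_pos_of_forall_ofReal
    (differentiableOn_laplaceTransform laplaceIntegrable_chordSum)
    differentiableOn_tsum_dualTerm (fun σ hσ ↦ ?_) hs
  simp only [laplaceTransform_ofReal, dualTerm_ofReal]
  rw [← Complex.ofReal_tsum, integral_eq_lintegral_of_nonneg_ae
    (.of_forall fun t ↦ mul_nonneg (chordSum_nonneg t) (exp_pos _).le)
    (measurable_chordSum.mul (by fun_prop)).aestronglyMeasurable,
    lintegral_chordSum_mul_exp hσ, ENNReal.toReal_ofReal]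
  exact tsum_nonneg fun z ↦ by positivity

/-- The error term in approximating `chordSum t` by the volume of the ball of radius `t`. -/
noncomputable def chordError (t : ℝ) : ℝ := chordSum t - 4 * π / 3 * t ^ 3

theorem chordError_eq (t : ℝ) : chordError t = chordSum t + -(4 * π / 3) * t ^ 3 := by
  rw [chordError, neg_mul, sub_eq_add_neg]

theorem laplaceTransform_chordError {s : ℂ} (hs : 0 < s.re) :
    laplaceTransform chordError s = ∑' z, if z = 0 then 0 else dualTerm s z := by
  have hsplit := (summable_dualTerm hs).tsum_eq_add_tsum_ite 0
  have hzero : dualTerm s 0 = 8 * π / s ^ 4 := by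
    rw [dualTerm, sqNorm_zero, Complex.ofReal_zero]
    ring_nf
  rw [funext chordError_eq, laplaceTransform_add laplaceIntegrable_chordSum
    ((laplaceIntegrable_pow 3).const_mul _) hs, laplaceTransform_const_mul,
    laplaceTransform_pow 3 hs, laplaceTransform_chordSum hs, hsplit, hzero]
  norm_num [Nat.factorial]
  ring

theorem hasLaplaceAmplitude_chordError : HasLaplaceAmplitude chordError chordAmplitude where
  laplaceIntegrable := by
    rw [funext chordError_eq]
    exact laplaceIntegrable_chordSum.add ((laplaceIntegrable_pow 3).const_mul _)
  tendsto l := by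
    refine (tendsto_sq_mul_tsum_dualTerm l).congr' ?_
    filter_upwards [self_mem_nhdsWithin] with σ (hσ : 0 < σ)
    rw [laplaceTransform_chordError (by simpa using hσ)]

end ChordSum

section RieszMean

open Finset

theorem sum_Icc_sub_sq (v : ℝ) (n : ℕ) :
    ∑ b ∈ Icc (-n : ℤ) n, (v - (b : ℝ) ^ 2) =
      (2 * n + 1) * v - n * (n + 1) * (2 * n + 1) / 3 := by
  have hsq : ∑ k ∈ range (n + 1), (k : ℝ) ^ 2 = n * (n + 1) * (2 * n + 1) / 6 := by
    induction n with
    | zero => simp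
    | succ n ih => rw [sum_range_succ, ih]; push_cast; ring
  rw [sum_Icc_of_even_eq_range (fun b ↦ by simp)]
  simp only [Int.cast_natCast, sum_sub_distrib, hsq, sum_const, card_range, nsmul_eq_mul]
  push_cast
  ring

theorem sum_Icc_max_sub_sq_eq {v : ℝ} (hv : 0 ≤ v) {M : ℕ} (hM : √v ≤ M) :
    ∑ b ∈ Icc (-M : ℤ) M, max (v - (b : ℝ) ^ 2) 0 =
      ∑ b ∈ Icc (-⌊√v⌋₊ : ℤ) ⌊√v⌋₊, (v - (b : ℝ) ^ 2) := by
  have hmem (b : ℤ) : b ∈ Icc (-⌊√v⌋₊ : ℤ) ⌊√v⌋₊ ↔ (b : ℝ) ^ 2 ≤ v := by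
    rw [Finset.mem_Icc, ← abs_le, Int.abs_eq_natAbs, Nat.cast_le, Nat.le_floor_iff (sqrt_nonneg v),
      Nat.cast_natAbs, Int.cast_abs, Real.le_sqrt (abs_nonneg _) hv, sq_abs]
  have hle : (⌊√v⌋₊ : ℤ) ≤ M := mod_cast Nat.floor_le_of_le hM
  rw [← sum_subset (Icc_subset_Icc (neg_le_neg hle) hle) fun b _ hb ↦
    max_eq_right (by linarith [not_le.1 (mt (hmem b).2 hb)])]
  exact sum_congr rfl fun b hb ↦ max_eq_left (by linarith [(hmem b).1 hb])

theorem abs_sum_Icc_max_sub_sq_sub_le {v : ℝ} {M : ℕ} (hM : √v ≤ M) :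
    |∑ b ∈ Icc (-M : ℤ) M, max (v - (b : ℝ) ^ 2) 0 - 4 / 3 * (v * √v)| ≤ √v := by
  rcases lt_or_ge v 0 with hv | hv
  · rw [sqrt_eq_zero_of_nonpos hv.le, sum_eq_zero fun b _ ↦ max_eq_right (by nlinarith)]
    simp
  rw [sum_Icc_max_sub_sq_eq hv hM, sum_Icc_sub_sq]
  have hr : 0 ≤ √v := sqrt_nonneg v
  have hv2 : √v ^ 2 = v := sq_sqrt hv
  have hθ0 := sub_nonneg.2 (Nat.floor_le hr)
  have hθ1 : √v - ⌊√v⌋₊ ≤ 1 := by linarith [Nat.lt_floor_add_one √v]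
  have hθr : √v - ⌊√v⌋₊ ≤ √v := sub_le_self _ (Nat.cast_nonneg _)
  generalize √v = r at *
  obtain ⟨θ, hθ⟩ : ∃ θ, θ = r - ⌊r⌋₊ := ⟨_, rfl⟩
  rw [← hθ] at hθ0 hθ1 hθr
  have hlin : |6 * θ ^ 2 - 6 * θ + 1| ≤ 1 :=
    abs_le.2 ⟨by nlinarith [sq_nonneg (θ - 1 / 2)], by nlinarith⟩
  have hcub : |(1 - θ) * (1 - 2 * θ)| ≤ 1 := by
    rw [abs_mul]
    exact mul_le_one₀ (abs_le.2 ⟨by linarith, by linarith⟩) (abs_nonneg _)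
      (abs_le.2 ⟨by linarith, by linarith⟩)
  calc |(2 * ⌊r⌋₊ + 1) * v - ⌊r⌋₊ * (⌊r⌋₊ + 1) * (2 * ⌊r⌋₊ + 1) / 3 - 4 / 3 * (v * r)|
      = |θ * ((1 - θ) * (1 - 2 * θ)) / 3 - (6 * θ ^ 2 - 6 * θ + 1) * r / 3| := by
        rw [hθ, ← hv2]; congr 1; ring
    _ ≤ |θ * ((1 - θ) * (1 - 2 * θ)) / 3| + |(6 * θ ^ 2 - 6 * θ + 1) * r / 3| := abs_sub _ _
    _ = (θ * |(1 - θ) * (1 - 2 * θ)| + |6 * θ ^ 2 - 6 * θ + 1| * r) / 3 := by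
        rw [abs_div, abs_div, abs_mul θ, abs_mul _ r, abs_of_nonneg hθ0, abs_of_nonneg hr,
          Nat.abs_ofNat]
        ring
    _ ≤ (r * 1 + 1 * r) / 3 := by gcongr
    _ ≤ r := by linarith

theorem integral_max_sub_sq {w r : ℝ} (hr : 0 ≤ r) (hw : w ≤ r ^ 2) :
    ∫ y in (-r)..r, max (w - y ^ 2) 0 = 4 / 3 * (w * √w) := by
  have hsupp : (Function.support fun y : ℝ ↦ max (w - y ^ 2) 0) ⊆ Set.Ioc (-√w) √w := fun y hy ↦ by
    by_contra hmem
    refine hy (max_eq_right (sub_nonpos.2 (not_lt.1 fun hlt ↦ hmem ?_)))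
    exact ⟨neg_sqrt_lt_of_sq_lt hlt, (lt_sqrt_of_sq_lt hlt).le⟩
  have hsr : √w ≤ r := Real.sqrt_le_iff.2 ⟨hr, hw⟩
  have hs : -√w ≤ √w := neg_le_self (sqrt_nonneg w)
  rw [intervalIntegral.integral_eq_integral_of_support_subset
      (hsupp.trans (Set.Ioc_subset_Ioc (neg_le_neg hsr) hsr)),
    ← intervalIntegral.integral_eq_integral_of_support_subset hsupp]
  rcases lt_or_ge w 0 with hw0 | hw0
  · simp [sqrt_eq_zero_of_nonpos hw0.le]
  calc ∫ y in (-√w)..√w, max (w - y ^ 2) 0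
      = ∫ y in (-√w)..√w, (w - y ^ 2) := intervalIntegral.integral_congr fun y hy ↦ by
        rw [Set.uIcc_of_le hs] at hy
        exact max_eq_left (sub_nonneg.2 (Real.sq_le hw0 |>.2 hy))
    _ = 2 * (w * √w) - 2 / 3 * (√w ^ 2 * √w) := by
        rw [intervalIntegral.integral_sub (by simp) ((continuous_pow 2).intervalIntegrable _ _),
          intervalIntegral.integral_const, integral_pow]
        simp
        ring
    _ = 4 / 3 * (w * √w) := by rw [sq_sqrt hw0]; ring

theorem hasDerivAt_sqrt_sq_sub_sq {r y : ℝ} (hy : y ^ 2 < r ^ 2) :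
    HasDerivAt (fun y ↦ √(r ^ 2 - y ^ 2)) (-y / √(r ^ 2 - y ^ 2)) y := by
  refine (((hasDerivAt_pow 2 y).const_sub (r ^ 2)).sqrt (sub_pos.2 hy).ne').congr_deriv ?_
  simp only [Nat.cast_ofNat, Nat.add_one_sub_one, pow_one]
  ring

theorem hasDerivAt_arcsin_div {r y : ℝ} (hr : 0 < r) (hy : y ∈ Set.Ioo (-r) r) :
    HasDerivAt (fun y ↦ arcsin (y / r)) (1 / √(r ^ 2 - y ^ 2)) y := by
  have hneg : y / r ≠ -1 := fun h ↦ by rw [div_eq_iff hr.ne'] at h; linarith [hy.1]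
  have hpos : y / r ≠ 1 := fun h ↦ by rw [div_eq_iff hr.ne'] at h; linarith [hy.2]
  refine ((hasDerivAt_arcsin hneg hpos).comp y ((hasDerivAt_id y).div_const r)).congr_deriv ?_
  rw [show 1 - (y / r) ^ 2 = (r ^ 2 - y ^ 2) / r ^ 2 by field_simp, sqrt_div', sqrt_sq hr.le]
  · field_simp
  · positivity

theorem integral_sq_sub_sq_mul_sqrt {r : ℝ} (hr : 0 < r) :
    ∫ y in (-r)..r, 4 / 3 * ((r ^ 2 - y ^ 2) * √(r ^ 2 - y ^ 2)) = π / 2 * r ^ 4 := by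
  have hderiv (y : ℝ) (hy : y ∈ Set.Ioo (-r) r) :
      HasDerivAt (fun y ↦ (y * √(r ^ 2 - y ^ 2) ^ 3 +
          3 / 2 * r ^ 2 * (y * √(r ^ 2 - y ^ 2) + r ^ 2 * arcsin (y / r))) / 3)
        (4 / 3 * ((r ^ 2 - y ^ 2) * √(r ^ 2 - y ^ 2))) y := by
    have hy2 : y ^ 2 < r ^ 2 := sq_lt_sq.2 (by rw [abs_of_pos hr]; exact abs_lt.2 hy)
    have hsqrt := hasDerivAt_sqrt_sq_sub_sq hy2
    have hs0 : 0 < √(r ^ 2 - y ^ 2) := sqrt_pos.2 (sub_pos.2 hy2)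
    have hs2 : √(r ^ 2 - y ^ 2) ^ 2 = r ^ 2 - y ^ 2 := sq_sqrt (sub_pos.2 hy2).le
    refine ((((hasDerivAt_id y).mul (hsqrt.pow 3)).add ((((hasDerivAt_id y).mul hsqrt).add
      ((hasDerivAt_arcsin_div hr hy).const_mul (r ^ 2))).const_mul
        (3 / 2 * r ^ 2))).div_const 3).congr_deriv ?_
    simp only [id, Pi.pow_apply, Nat.cast_ofNat, Nat.add_one_sub_one]
    generalize √(r ^ 2 - y ^ 2) = s at *
    rw [show r ^ 2 = s ^ 2 + y ^ 2 by linarith]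
    field_simp
    ring
  have : Continuous fun y ↦ arcsin (y / r) := continuous_arcsin.comp (by fun_prop)
  rw [intervalIntegral.integral_eq_sub_of_hasDerivAt_of_le (neg_lt_self hr).le
    (Continuous.continuousOn (by fun_prop)) hderiv
    (Continuous.intervalIntegrable (by fun_prop) _ _)]
  simp [neg_div, div_self hr.ne']
  ring

/-- The square `[-M, M]²` of the Gaussian lattice, as a range of summation. -/
noncomputable def latticeBox (M : ℕ) : Finset (ℤ × ℤ) := Icc (-M : ℤ) M ×ˢ Icc (-M : ℤ) M

theorem sq_le_sqNorm_of_notMem_latticeBox {M : ℕ} {z : ℤ × ℤ} (hz : z ∉ latticeBox M) :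
    (M : ℝ) ^ 2 ≤ sqNorm z := by
  have hcoord (a : ℤ) (ha : (a : ℝ) ^ 2 < M ^ 2) : a ∈ Icc (-M : ℤ) M := by
    rw [Finset.mem_Icc, ← abs_le]
    exact_mod_cast (abs_lt_of_sq_lt_sq ha (Nat.cast_nonneg M)).le
  contrapose! hz
  rw [sqNorm] at hz
  exact mem_product.2 ⟨hcoord _ (by nlinarith), hcoord _ (by nlinarith)⟩

theorem abs_sum_latticeBox_max_sub_sqNorm_sub_le {u : ℝ} (hu : 0 ≤ u) {M : ℕ} (hM : √u ≤ M) :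
    |∑ z ∈ latticeBox M, max (u - sqNorm z) 0 - π / 2 * u ^ 2| ≤ (2 * M + 1) * √u + 2 * u := by
  simp only [latticeBox, sum_product, sqNorm, ← sub_sub]
  rcases hu.eq_or_lt with rfl | hu0
  · rw [sum_eq_zero fun a _ ↦ sum_eq_zero fun b _ ↦ max_eq_right (by nlinarith [sq_nonneg (a : ℝ)])]
    simp
  have hr0 : 0 < √u := sqrt_pos.2 hu0
  have hr2 : √u ^ 2 = u := sq_sqrt hu
  have hone (a : ℝ) : |∑ b ∈ Icc (-M : ℤ) M, max (u - a ^ 2 - (b : ℝ) ^ 2) 0 -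
      4 / 3 * ((u - a ^ 2) * √(u - a ^ 2))| ≤ √u := by
    have hle : √(u - a ^ 2) ≤ √u := sqrt_le_sqrt (sub_le_self _ (sq_nonneg a))
    exact (abs_sum_Icc_max_sub_sq_sub_le (hle.trans hM)).trans hle
  have houter : |∑ a ∈ Icc (-M : ℤ) M, ∑ b ∈ Icc (-M : ℤ) M,
      max (u - (a : ℝ) ^ 2 - (b : ℝ) ^ 2) 0 - ∑ a ∈ Icc (-M : ℤ) M,
        4 / 3 * ((u - (a : ℝ) ^ 2) * √(u - (a : ℝ) ^ 2))| ≤ (2 * M + 1) * √u := by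
    have hcard : (Icc (-M : ℤ) M).card = 2 * M + 1 := by rw [Int.card_Icc]; omega
    rw [← sum_sub_distrib]
    refine ((abs_sum_le_sum_abs _ _).trans
      (sum_le_card_nsmul _ _ _ fun (a : ℤ) _ ↦ hone a)).trans_eq ?_
    rw [hcard, nsmul_eq_mul]
    push_cast
    rfl
  have hswap : ∑ a ∈ Icc (-M : ℤ) M, 4 / 3 * ((u - (a : ℝ) ^ 2) * √(u - (a : ℝ) ^ 2)) =
      ∫ y in (-√u)..√u, ∑ a ∈ Icc (-M : ℤ) M, max (u - y ^ 2 - (a : ℝ) ^ 2) 0 := by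
    rw [intervalIntegral.integral_finsetSum
      fun a _ ↦ Continuous.intervalIntegrable (by fun_prop) _ _]
    refine sum_congr rfl fun a _ ↦ ?_
    rw [← integral_max_sub_sq hr0.le (hr2.symm ▸ sub_le_self _ (sq_nonneg (a : ℝ)))]
    simp only [sub_right_comm]
  have hinner : |(∫ y in (-√u)..√u, ∑ a ∈ Icc (-M : ℤ) M, max (u - y ^ 2 - (a : ℝ) ^ 2) 0) -
      π / 2 * u ^ 2| ≤ 2 * u := by
    rw [show π / 2 * u ^ 2 = π / 2 * √u ^ 4 by rw [pow_mul √u 2 2, hr2],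
      ← integral_sq_sub_sq_mul_sqrt hr0, hr2, ← intervalIntegral.integral_sub
        (Continuous.intervalIntegrable (by fun_prop) _ _)
        (Continuous.intervalIntegrable (by fun_prop) _ _), ← norm_eq_abs]
    refine (intervalIntegral.norm_integral_le_of_norm_le_const fun y _ ↦ hone y).trans_eq ?_
    rw [abs_of_pos (by linarith), sub_neg_eq_add, ← two_mul, mul_left_comm, ← sq, hr2]
  exact (abs_sub_le _ _ _).trans (add_le_add houter (hswap ▸ hinner))

end RieszMean

section Profile

open MeasureTheory Set Topology

section TaylorRemainder

variable {f f' f'' : ℝ → ℝ} {a b : ℝ}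

theorem integral_max_sub_mul_deriv_deriv (hf : ContinuousOn f (Icc a b))
    (hf' : ContinuousOn f' (Icc a b)) (hderiv : ∀ v ∈ Ioo a b, HasDerivAt f (f' v) v)
    (hderiv' : ∀ v ∈ Ioo a b, HasDerivAt f' (f'' v) v) (hint : IntervalIntegrable f'' volume a b)
    (hfb : f b = 0) (hf'b : f' b = 0) {x : ℝ} (hx : x ∈ Icc a b) :
    ∫ v in a..b, max (v - x) 0 * f'' v = f x := by
  have hab : a ≤ b := hx.1.trans hx.2
  have hsub : uIcc x b ⊆ uIcc a b := by
    rw [uIcc_of_le hx.2, uIcc_of_le hab]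
    exact Icc_subset_Icc_left hx.1
  have hmax : IntervalIntegrable (fun v ↦ max (v - x) 0 * f'' v) volume a b :=
    hint.continuousOn_mul (by fun_prop)
  have hleft : ∫ v in a..x, max (v - x) 0 * f'' v = 0 :=
    intervalIntegral.integral_zero_ae (.of_forall fun v hv ↦ by
      rw [uIoc_of_le hx.1] at hv
      rw [max_eq_right (sub_nonpos.2 hv.2), zero_mul])
  have hright : ∫ v in x..b, max (v - x) 0 * f'' v = ∫ v in x..b, (v - x) * f'' v :=
    intervalIntegral.integral_congr fun v hv ↦ by
      rw [uIcc_of_le hx.2] at hv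
      rw [max_eq_left (sub_nonneg.2 hv.1)]
  have hparts : ∀ v ∈ Ioo x b, HasDerivAt (fun v ↦ (v - x) * f' v - f v) ((v - x) * f'' v) v :=
    fun v hv ↦ by
      have hv' : v ∈ Ioo a b := Ioo_subset_Ioo_left hx.1 hv
      refine ((((hasDerivAt_id v).sub_const x).mul (hderiv' v hv')).sub
        (hderiv v hv')).congr_deriv ?_
      simp
  rw [← intervalIntegral.integral_add_adjacent_intervals
      (hmax.mono_set (by rw [uIcc_of_le hx.1, uIcc_of_le hab]; exact Icc_subset_Icc_right hx.2))
      (hmax.mono_set hsub), hleft, hright,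
    intervalIntegral.integral_eq_sub_of_hasDerivAt_of_le hx.2 ?_ hparts
      ((hint.continuousOn_mul (by fun_prop)).mono_set hsub)]
  · simp [hfb, hf'b]
  · have := hf.mono (Icc_subset_Icc_left hx.1)
    have := hf'.mono (Icc_subset_Icc_left hx.1)
    fun_prop

theorem integral_sq_mul_deriv_deriv (hb : 0 ≤ b) (hf : ContinuousOn f (Icc 0 b))
    (hf' : ContinuousOn f' (Icc 0 b)) (hderiv : ∀ v ∈ Ioo 0 b, HasDerivAt f (f' v) v)
    (hderiv' : ∀ v ∈ Ioo 0 b, HasDerivAt f' (f'' v) v) (hint : IntervalIntegrable f'' volume 0 b)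
    (hfb : f b = 0) (hf'b : f' b = 0) :
    ∫ v in (0 : ℝ)..b, v ^ 2 * f'' v = 2 * ∫ v in (0 : ℝ)..b, f v := by
  have hsq : IntervalIntegrable (fun v ↦ v ^ 2 * f'' v) volume 0 b :=
    hint.continuousOn_mul (by fun_prop)
  have hfint : IntervalIntegrable (fun v ↦ 2 * f v) volume 0 b :=
    (ContinuousOn.intervalIntegrable (by rwa [uIcc_of_le hb])).const_mul 2
  have hparts : ∀ v ∈ Ioo 0 b,
      HasDerivAt (fun v ↦ v ^ 2 * f' v - 2 * v * f v) (v ^ 2 * f'' v - 2 * f v) v := fun v hv ↦ by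
    refine (((hasDerivAt_pow 2 v).mul (hderiv' v hv)).sub
      (((hasDerivAt_id v).const_mul 2).mul (hderiv v hv))).congr_deriv ?_
    simp
    ring
  rw [← sub_eq_zero, ← intervalIntegral.integral_const_mul,
    ← intervalIntegral.integral_sub hsq hfint,
    intervalIntegral.integral_eq_sub_of_hasDerivAt_of_le hb (by fun_prop) hparts (hsq.sub hfint)]
  simp [hfb, hf'b]

end TaylorRemainder

/-- The profile `c` of the difference between the approximation `√2 √X · 2√(X - q)` and the fibre
length `2√(X² - q²)`: the difference is `2 X c(q / X)` for `0 ≤ q ≤ X`. -/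
noncomputable def profile (v : ℝ) : ℝ := √(1 - v) * (√2 - √(1 + v))

/-- The derivative of `profile` on `(0, 1)`, rationalized so that it is continuous on `[0, 1]`. -/
noncomputable def profileDeriv (v : ℝ) : ℝ :=
  -(√(1 - v) * (1 + 2 * v) / (√(1 + v) * (√2 * √(1 + v) + 2 * v)))

/-- The second derivative of `profile` on `(0, 1)`. -/
noncomputable def profileDeriv₂ (v : ℝ) : ℝ :=
  1 / ((1 - v) * √(1 - v)) * (1 / ((1 + v) * √(1 + v)) - √2 / 4)

theorem profile_one : profile 1 = 0 := by simp [profile]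

theorem profileDeriv_one : profileDeriv 1 = 0 := by simp [profileDeriv]

theorem profileDeriv_zero : profileDeriv 0 = -(√2 / 2) := by
  rw [sqrt_div_self']
  simp [profileDeriv]

theorem continuous_profile : Continuous profile := by
  unfold profile
  fun_prop

theorem continuousOn_profileDeriv : ContinuousOn profileDeriv (Icc 0 1) := by
  refine ContinuousOn.neg (ContinuousOn.div (by fun_prop) (by fun_prop) fun v hv ↦ ?_)
  have hv0 : 0 ≤ v := hv.1
  positivity

theorem hasDerivAt_sqrt_one_sub {v : ℝ} (hv : v < 1) :
    HasDerivAt (fun v ↦ √(1 - v)) (-1 / (2 * √(1 - v))) v :=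
  ((hasDerivAt_id v).const_sub 1).sqrt (sub_pos.2 hv).ne'

theorem hasDerivAt_sqrt_one_add {v : ℝ} (hv : -1 < v) :
    HasDerivAt (fun v ↦ √(1 + v)) (1 / (2 * √(1 + v))) v :=
  ((hasDerivAt_id v).const_add 1).sqrt (neg_lt_iff_pos_add'.1 hv).ne'

theorem profileDeriv_eq {v : ℝ} (hv : v ∈ Ioo (0 : ℝ) 1) :
    profileDeriv v = -√2 / (2 * √(1 - v)) + v / (√(1 - v) * √(1 + v)) := by
  have hv0 : 0 < v := hv.1
  have hp0 : 0 < √(1 - v) := sqrt_pos.2 (sub_pos.2 hv.2)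
  have hp2 : √(1 - v) ^ 2 = 1 - v := sq_sqrt (sub_pos.2 hv.2).le
  have hm2 : √(1 + v) ^ 2 = 1 + v := sq_sqrt (by positivity)
  have hm0 : 0 < √(1 + v) := by positivity
  have h2 : √2 ^ 2 = 2 := sq_sqrt zero_le_two
  have h20 : 0 < √2 := by positivity
  rw [profileDeriv]
  generalize √(1 - v) = p at *
  generalize √(1 + v) = m at *
  generalize √2 = w at *
  rw [div_add_div _ _ (by positivity) (by positivity), neg_eq_iff_add_eq_zero,
    div_add_div _ _ (by positivity) (by positivity), div_eq_zero_iff]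
  left
  linear_combination p * m * (4 * v + 2) * hp2 - p * m ^ 3 * h2 - 2 * p * m * hm2

theorem hasDerivAt_profile {v : ℝ} (hv : v ∈ Ioo (0 : ℝ) 1) :
    HasDerivAt profile (profileDeriv v) v := by
  have hp0 : 0 < √(1 - v) := sqrt_pos.2 (sub_pos.2 hv.2)
  have hm0 : 0 < √(1 + v) := sqrt_pos.2 (add_pos one_pos hv.1)
  have hp2 : √(1 - v) ^ 2 = 1 - v := sq_sqrt (sub_pos.2 hv.2).le
  have hm2 : √(1 + v) ^ 2 = 1 + v := sq_sqrt (add_pos one_pos hv.1).le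
  rw [profileDeriv_eq hv]
  refine ((hasDerivAt_sqrt_one_sub hv.2).mul ((hasDerivAt_sqrt_one_add
    (by linarith [hv.1])).const_sub √2)).congr_deriv ?_
  generalize √(1 - v) = p at *
  generalize √(1 + v) = m at *
  obtain rfl : v = (m ^ 2 - p ^ 2) / 2 := by rw [hp2, hm2]; ring
  field_simp
  ring

theorem hasDerivAt_profileDeriv {v : ℝ} (hv : v ∈ Ioo (0 : ℝ) 1) :
    HasDerivAt profileDeriv (profileDeriv₂ v) v := by
  have hp0 : 0 < √(1 - v) := sqrt_pos.2 (sub_pos.2 hv.2)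
  have hm0 : 0 < √(1 + v) := sqrt_pos.2 (add_pos one_pos hv.1)
  have hp2 : √(1 - v) ^ 2 = 1 - v := sq_sqrt (sub_pos.2 hv.2).le
  have hm2 : √(1 + v) ^ 2 = 1 + v := sq_sqrt (add_pos one_pos hv.1).le
  have hp := hasDerivAt_sqrt_one_sub hv.2
  have hm := hasDerivAt_sqrt_one_add (by linarith [hv.1] : -1 < v)
  refine HasDerivAt.congr_of_eventuallyEq (HasDerivAt.congr_deriv
    (((hasDerivAt_const v (-√2)).div (hp.const_mul 2) (by positivity)).add
      ((hasDerivAt_id v).div (hp.mul hm) (mul_pos hp0 hm0).ne')) ?_)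
    (Filter.eventually_of_mem (Ioo_mem_nhds hv.1 hv.2) fun x hx ↦ profileDeriv_eq hx)
  simp only [profileDeriv₂, Pi.mul_apply, id]
  generalize √(1 - v) = p at *
  generalize √(1 + v) = m at *
  generalize √2 = w at *
  have hsum : -1 / (2 * p) * m + p * (1 / (2 * m)) = (p ^ 2 - m ^ 2) / (2 * p * m) := by
    field_simp
    ring
  rw [hsum, ← hp2, ← hm2]
  obtain rfl : v = 1 - p ^ 2 := by linarith
  have hm2' : m ^ 2 = 2 - p ^ 2 := by linarith
  have : 0 < 2 - p ^ 2 := by rw [← hm2']; positivity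
  field_simp
  rw [hm2']
  ring

theorem profileDeriv₂_nonneg {v : ℝ} (hv : v ∈ Icc (0 : ℝ) 1) : 0 ≤ profileDeriv₂ v := by
  have hv0 : 0 ≤ v := hv.1
  have h1v : 0 ≤ 1 - v := sub_nonneg.2 hv.2
  refine mul_nonneg (by positivity) (sub_nonneg.2 ?_)
  calc √2 / 4 = 1 / (2 * √2) := by
        rw [div_eq_div_iff (by norm_num) (by positivity), mul_left_comm, mul_self_sqrt zero_le_two]
        norm_num
    _ ≤ 1 / ((1 + v) * √(1 + v)) := by gcongr <;> linarith [hv.2]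

theorem intervalIntegrable_profileDeriv₂ : IntervalIntegrable profileDeriv₂ volume 0 1 :=
  (intervalIntegrable_iff_integrableOn_Ioc_of_le zero_le_one).2
    (intervalIntegral.integrableOn_deriv_of_nonneg continuousOn_profileDeriv
      (fun _ ↦ hasDerivAt_profileDeriv) fun _ hv ↦ profileDeriv₂_nonneg (Ioo_subset_Icc_self hv))

theorem integral_profileDeriv₂ : ∫ v in (0 : ℝ)..1, profileDeriv₂ v = √2 / 2 := by
  rw [intervalIntegral.integral_eq_sub_of_hasDerivAt_of_le zero_le_one continuousOn_profileDeriv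
    (fun _ ↦ hasDerivAt_profileDeriv) intervalIntegrable_profileDeriv₂, profileDeriv_one,
    profileDeriv_zero, zero_sub, neg_neg]

theorem integral_max_sub_mul_profileDeriv₂ {x : ℝ} (hx : x ∈ Icc (0 : ℝ) 1) :
    ∫ v in (0 : ℝ)..1, max (v - x) 0 * profileDeriv₂ v = profile x :=
  integral_max_sub_mul_deriv_deriv continuous_profile.continuousOn continuousOn_profileDeriv
    (fun _ ↦ hasDerivAt_profile) (fun _ ↦ hasDerivAt_profileDeriv) intervalIntegrable_profileDeriv₂
    profile_one profileDeriv_one hx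

theorem integral_zero_one_sqrt_one_sub_sq : ∫ v in (0 : ℝ)..1, √(1 - v ^ 2) = π / 4 := by
  have hint (a b : ℝ) : IntervalIntegrable (fun v ↦ √(1 - v ^ 2)) volume a b :=
    Continuous.intervalIntegrable (by fun_prop) _ _
  have hneg : ∫ v in (-1 : ℝ)..0, √(1 - v ^ 2) = ∫ v in (0 : ℝ)..1, √(1 - v ^ 2) := by
    rw [← neg_zero, ← intervalIntegral.integral_comp_neg]
    simp only [neg_sq, neg_zero]
  have h := integral_sqrt_one_sub_sq
  rw [← intervalIntegral.integral_add_adjacent_intervals (hint _ 0) (hint 0 _), hneg] at h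
  linarith

theorem integral_profile : ∫ v in (0 : ℝ)..1, profile v = 2 * √2 / 3 - π / 4 := by
  have hsqrt : ∫ v in (0 : ℝ)..1, √(1 - v) = 2 / 3 := by
    rw [intervalIntegral.integral_comp_sub_left fun v ↦ √v]
    simp only [sqrt_eq_rpow, sub_self, sub_zero]
    rw [integral_rpow (by norm_num)]
    norm_num
  have hsplit : ∀ v ∈ uIcc (0 : ℝ) 1, profile v = √2 * √(1 - v) - √(1 - v ^ 2) := fun v hv ↦ by
    rw [uIcc_of_le zero_le_one] at hv
    rw [show 1 - v ^ 2 = (1 - v) * (1 + v) by ring, sqrt_mul (sub_nonneg.2 hv.2), profile]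
    ring
  rw [intervalIntegral.integral_congr hsplit, intervalIntegral.integral_sub
      (Continuous.intervalIntegrable (by fun_prop) _ _)
      (Continuous.intervalIntegrable (by fun_prop) _ _),
    intervalIntegral.integral_const_mul, hsqrt, integral_zero_one_sqrt_one_sub_sq]
  ring

theorem integral_sq_mul_profileDeriv₂ :
    ∫ v in (0 : ℝ)..1, v ^ 2 * profileDeriv₂ v = 4 * √2 / 3 - π / 2 := by
  rw [integral_sq_mul_deriv_deriv zero_le_one continuous_profile.continuousOn
    continuousOn_profileDeriv (fun _ ↦ hasDerivAt_profile) (fun _ ↦ hasDerivAt_profileDeriv)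
    intervalIntegrable_profileDeriv₂ profile_one profileDeriv_one, integral_profile]
  ring

end Profile

section Decomposition

open MeasureTheory

theorem sqrt_two_mul_chord_sub_eq_profile {t q : ℝ} (ht : 0 < t) (hqt : q ≤ t ^ 2) :
    √2 * t * (2 * √(t ^ 2 - q)) - 2 * √(t ^ 4 - q ^ 2) = 2 * t ^ 2 * profile (q / t ^ 2) := by
  have hsub : 1 - q / t ^ 2 = (t ^ 2 - q) / t ^ 2 := by field_simp
  have hadd : 1 + q / t ^ 2 = (t ^ 2 + q) / t ^ 2 := by field_simp
  rw [show t ^ 4 - q ^ 2 = (t ^ 2 - q) * (t ^ 2 + q) by ring, sqrt_mul (sub_nonneg.2 hqt), profile,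
    hsub, hadd, sqrt_div' _ (sq_nonneg t), sqrt_div' _ (sq_nonneg t), sqrt_sq ht.le]
  field_simp

theorem sqrt_two_mul_chord_sub_eq_integral {t q : ℝ} (ht : 0 < t) (hq : 0 ≤ q) :
    √2 * t * (2 * √(t ^ 2 - q)) - 2 * √(t ^ 4 - q ^ 2) =
      2 * ∫ v in (0 : ℝ)..1, max (t ^ 2 * v - q) 0 * profileDeriv₂ v := by
  rcases le_or_gt q (t ^ 2) with hqt | hqt
  · have hscale (v : ℝ) : max (t ^ 2 * v - q) 0 * profileDeriv₂ v =
        t ^ 2 * (max (v - q / t ^ 2) 0 * profileDeriv₂ v) := by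
      rw [← mul_assoc, mul_max_of_nonneg _ _ (sq_nonneg t), mul_sub, mul_zero,
        mul_div_cancel₀ _ (by positivity)]
    rw [sqrt_two_mul_chord_sub_eq_profile ht hqt, funext hscale,
      intervalIntegral.integral_const_mul, integral_max_sub_mul_profileDeriv₂
        ⟨by positivity, div_le_one_of_le₀ hqt (sq_nonneg t)⟩, mul_assoc]
  · rw [sqrt_eq_zero_of_nonpos (sub_nonpos.2 hqt.le), sqrt_eq_zero_of_nonpos
        (by nlinarith [sq_nonneg t] : t ^ 4 - q ^ 2 ≤ 0),
      intervalIntegral.integral_zero_ae (.of_forall fun v hv ↦ ?_)]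
    · simp
    · rw [Set.uIoc_of_le zero_le_one] at hv
      rw [max_eq_right (by nlinarith [hv.2]), zero_mul]

theorem intervalIntegrable_mul_profileDeriv₂ {f : ℝ → ℝ} (hf : Continuous f) :
    IntervalIntegrable (fun v ↦ f v * profileDeriv₂ v) volume 0 1 :=
  intervalIntegrable_profileDeriv₂.continuousOn_mul hf.continuousOn

theorem sum_sqrt_two_mul_chord_sub_eq_integral {t : ℝ} (ht : 0 < t) (J : Finset (ℤ × ℤ)) :
    ∑ z ∈ J, (√2 * t * (2 * √(t ^ 2 - sqNorm z)) - 2 * √(t ^ 4 - sqNorm z ^ 2)) =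
      2 * ∫ v in (0 : ℝ)..1, (∑ z ∈ J, max (t ^ 2 * v - sqNorm z) 0) * profileDeriv₂ v := by
  simp only [Finset.sum_mul]
  rw [intervalIntegral.integral_finsetSum
    fun z _ ↦ intervalIntegrable_mul_profileDeriv₂ (by fun_prop), Finset.mul_sum]
  exact Finset.sum_congr rfl fun z _ ↦ sqrt_two_mul_chord_sub_eq_integral ht (sqNorm_nonneg z)

theorem abs_sum_sqrt_two_mul_chord_sub_sub_le {t : ℝ} (ht : 0 < t) {M : ℕ} (hM : t ≤ M) :
    |∑ z ∈ latticeBox M,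
        (√2 * t * (2 * √(t ^ 2 - sqNorm z)) - 2 * √(t ^ 4 - sqNorm z ^ 2)) -
      (√2 * (4 * π / 3) - π ^ 2 / 2) * t ^ 4| ≤ √2 * ((2 * M + 1) * t + 2 * t ^ 2) := by
  have hmain : (√2 * (4 * π / 3) - π ^ 2 / 2) * t ^ 4 =
      2 * ∫ v in (0 : ℝ)..1, π / 2 * (t ^ 2 * v) ^ 2 * profileDeriv₂ v := by
    rw [show (fun v ↦ π / 2 * (t ^ 2 * v) ^ 2 * profileDeriv₂ v) =
        fun v ↦ π / 2 * t ^ 4 * (v ^ 2 * profileDeriv₂ v) by ext; ring,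
      intervalIntegral.integral_const_mul, integral_sq_mul_profileDeriv₂]
    ring
  have hpoint (v : ℝ) (hv : v ∈ Set.Ioc (0 : ℝ) 1) :
      ‖(∑ z ∈ latticeBox M, max (t ^ 2 * v - sqNorm z) 0) * profileDeriv₂ v -
        π / 2 * (t ^ 2 * v) ^ 2 * profileDeriv₂ v‖ ≤
      ((2 * M + 1) * t + 2 * t ^ 2) * profileDeriv₂ v := by
    have hv2 : t ^ 2 * v ≤ t ^ 2 := mul_le_of_le_one_right (sq_nonneg t) hv.2
    have htv : √(t ^ 2 * v) ≤ t := sqrt_le_iff.2 ⟨ht.le, hv2⟩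
    have hmean := abs_sum_latticeBox_max_sub_sqNorm_sub_le
      (mul_nonneg (sq_nonneg t) hv.1.le) (htv.trans hM)
    have hnonneg := profileDeriv₂_nonneg (Set.Ioc_subset_Icc_self hv)
    rw [← sub_mul, norm_mul, norm_of_nonneg hnonneg, norm_eq_abs]
    refine mul_le_mul_of_nonneg_right (hmean.trans ?_) hnonneg
    gcongr
  rw [sum_sqrt_two_mul_chord_sub_eq_integral ht, hmain, ← mul_sub, ← intervalIntegral.integral_sub
    (intervalIntegrable_mul_profileDeriv₂ (by fun_prop))
    (intervalIntegrable_mul_profileDeriv₂ (by fun_prop)), abs_mul, abs_two, ← norm_eq_abs]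
  have hbound := intervalIntegral.norm_integral_le_of_norm_le zero_le_one (.of_forall hpoint)
    (intervalIntegrable_profileDeriv₂.const_mul _)
  rw [intervalIntegral.integral_const_mul, integral_profileDeriv₂] at hbound
  linarith

/-- The rounding error `2⌈y⌉ - 1 - 2y` in counting the integers `w` with `|w| < y`. -/
noncomputable def sawtooth (y : ℝ) : ℝ := 2 * ⌈y⌉ - 1 - 2 * y

theorem abs_sawtooth_le_one (y : ℝ) : |sawtooth y| ≤ 1 := by
  rw [sawtooth, abs_le]
  constructor <;> linarith [Int.le_ceil y, Int.ceil_lt_add_one y]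

theorem measurable_sawtooth : Measurable sawtooth := by
  have hceil : Measurable fun y : ℝ ↦ (⌈y⌉ : ℝ) :=
    (measurable_from_top (f := fun n : ℤ ↦ (n : ℝ))).comp Int.measurable_ceil
  unfold sawtooth
  fun_prop

/-- The rounding error in counting the lattice points `(z, w)` of the Cygan–Korányi ball of
radius `t` above a given `z`; it vanishes when that fibre is empty. -/
noncomputable def fibreError (z : ℤ × ℤ) (t : ℝ) : ℝ :=
  if sqNorm z < t ^ 2 then sawtooth √(t ^ 4 - sqNorm z ^ 2) else 0

theorem abs_fibreError_le_one (z : ℤ × ℤ) (t : ℝ) : |fibreError z t| ≤ 1 := by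
  unfold fibreError
  split_ifs
  · exact abs_sawtooth_le_one _
  · simp

theorem fibreError_of_sq_le {z : ℤ × ℤ} {t : ℝ} (h : t ^ 2 ≤ sqNorm z) : fibreError z t = 0 :=
  if_neg h.not_gt

theorem sq_lt_iff_mem_Icc {u : ℝ} {w : ℤ} :
    (w : ℝ) ^ 2 < u ↔ w ∈ Finset.Icc (1 - ⌈√u⌉) (⌈√u⌉ - 1) := by
  rw [← sq_abs, ← Int.cast_abs, ← lt_sqrt (by positivity), ← Int.lt_ceil, abs_lt, Finset.mem_Icc]
  omega

theorem card_Icc_one_sub_ceil_sqrt (z : ℤ × ℤ) (t : ℝ) :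
    ((Finset.Icc (1 - ⌈√(t ^ 4 - sqNorm z ^ 2)⌉) (⌈√(t ^ 4 - sqNorm z ^ 2)⌉ - 1)).card : ℝ) =
      fibreError z t + 2 * √(t ^ 4 - sqNorm z ^ 2) := by
  have hz := sqNorm_nonneg z
  rw [Int.card_Icc]
  rcases lt_or_ge (sqNorm z) (t ^ 2) with h | h
  · have hceil : 1 ≤ ⌈√(t ^ 4 - sqNorm z ^ 2)⌉ :=
      Int.one_le_ceil_iff.2 (sqrt_pos.2 (by nlinarith))
    rw [fibreError, if_pos h, sawtooth, ← Int.cast_natCast, Int.toNat_of_nonneg (by omega)]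
    push_cast
    ring
  · rw [fibreError_of_sq_le h, sqrt_eq_zero_of_nonpos (by nlinarith [sq_nonneg t])]
    simp

theorem natCast_N_eq_sum {t : ℝ} {J : Finset (ℤ × ℤ)} (hJ : ∀ z ∉ J, t ^ 2 ≤ sqNorm z) :
    (N t : ℝ) = ∑ z ∈ J, (fibreError z t + 2 * √(t ^ 4 - sqNorm z ^ 2)) := by
  let fibre (z : ℤ × ℤ) : Finset ℤ :=
    Finset.Icc (1 - ⌈√(t ^ 4 - sqNorm z ^ 2)⌉) (⌈√(t ^ 4 - sqNorm z ^ 2)⌉ - 1)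
  have hball : {p : ℤ × ℤ × ℤ | ((p.1 : ℝ) ^ 2 + (p.2.1 : ℝ) ^ 2) ^ 2 + (p.2.2 : ℝ) ^ 2 < t ^ 4} =
      (fun p : (_ : ℤ × ℤ) × ℤ ↦ (p.1.1, p.1.2, p.2)) '' (J.sigma fibre) := by
    ext ⟨a, b, w⟩
    have hiff : (a, b) ∈ J ∧ (w : ℝ) ^ 2 < t ^ 4 - sqNorm (a, b) ^ 2 ↔
        ((a : ℝ) ^ 2 + (b : ℝ) ^ 2) ^ 2 + (w : ℝ) ^ 2 < t ^ 4 := by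
      rw [lt_sub_iff_add_lt', sqNorm, and_iff_right_iff_imp]
      intro hlt
      by_contra hmem
      have hle := hJ _ hmem
      rw [sqNorm] at hle
      nlinarith [sq_nonneg (w : ℝ), sq_nonneg t]
    rw [Set.mem_ofPred_eq, ← hiff, sq_lt_iff_mem_Icc]
    simp [fibre, Sigma.exists]
  have hinj : Function.Injective fun p : (_ : ℤ × ℤ) × ℤ ↦ (p.1.1, p.1.2, p.2) := by
    rintro ⟨⟨a, b⟩, w⟩ ⟨⟨a', b'⟩, w'⟩ h
    simp_all
  rw [N, hball, Set.ncard_image_of_injective _ hinj, Set.ncard_coe_finset, Finset.card_sigma,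
    Nat.cast_sum]
  exact Finset.sum_congr rfl fun z _ ↦ card_Icc_one_sub_ceil_sqrt z t

/-- The total rounding error over all fibres `z ≠ 0`. -/
noncomputable def fibreErrorSum (t : ℝ) : ℝ := ∑' z : ℤ × ℤ, if z = 0 then 0 else fibreError z t

theorem abs_N_sub_le {t : ℝ} (ht : 0 < t) :
    |N t - π ^ 2 / 2 * t ^ 4 - √2 * t * chordError t - fibreErrorSum t| ≤ 10 * (t ^ 2 + 1) := by
  obtain ⟨M, hM⟩ : ∃ M, M = ⌈t⌉₊ := ⟨_, rfl⟩
  have htM : t ≤ M := hM ▸ Nat.le_ceil t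
  have hMt : M ≤ t + 1 := hM ▸ (Nat.ceil_lt_add_one ht.le).le
  have hout (z) (hz : z ∉ latticeBox M) : t ^ 2 ≤ sqNorm z :=
    (pow_le_pow_left₀ ht.le htM 2).trans (sq_le_sqNorm_of_notMem_latticeBox hz)
  have hchord : chordSum t = ∑ z ∈ latticeBox M, 2 * √(t ^ 2 - sqNorm z) :=
    tsum_eq_sum fun z hz ↦ by rw [sqrt_eq_zero_of_nonpos (sub_nonpos.2 (hout z hz)), mul_zero]
  have hzero : (0 : ℤ × ℤ) ∈ latticeBox M := by simp [latticeBox]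
  have herror : fibreErrorSum t = ∑ z ∈ latticeBox M, fibreError z t - fibreError 0 t := by
    rw [fibreErrorSum, tsum_eq_sum fun z hz ↦ by rw [fibreError_of_sq_le (hout z hz), ite_self],
      ← Finset.sum_erase_eq_sub hzero, Finset.sum_ite, Finset.sum_const_zero, zero_add,
      Finset.filter_ne']
  have hsmooth := abs_sum_sqrt_two_mul_chord_sub_sub_le ht htM
  rw [Finset.sum_sub_distrib, ← Finset.mul_sum, ← hchord] at hsmooth
  rw [natCast_N_eq_sum hout, Finset.sum_add_distrib, herror, chordError]
  have hsqrt : √2 ≤ 3 / 2 := sqrt_le_iff.2 (by norm_num)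
  calc _ = |fibreError 0 t - (√2 * t * chordSum t -
          ∑ z ∈ latticeBox M, 2 * √(t ^ 4 - sqNorm z ^ 2) -
            (√2 * (4 * π / 3) - π ^ 2 / 2) * t ^ 4)| := by
        congr 1
        ring
    _ ≤ 1 + √2 * ((2 * M + 1) * t + 2 * t ^ 2) :=
        (abs_sub _ _).trans (add_le_add (abs_fibreError_le_one 0 t) hsmooth)
    _ ≤ 1 + 3 / 2 * ((2 * (t + 1) + 1) * t + 2 * t ^ 2) := by gcongr
    _ ≤ 10 * (t ^ 2 + 1) := by nlinarith [sq_nonneg (t - 1)]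

end Decomposition

section FibreError

open MeasureTheory Set Filter Topology

theorem sawtooth_of_mem_Ioc {j : ℕ} {y : ℝ} (hy : y ∈ Ioc (j : ℝ) (j + 1)) :
    sawtooth y = 2 * j + 1 - 2 * y := by
  have hceil : ⌈y⌉ = (j : ℤ) + 1 := by
    rw [Int.ceil_eq_iff]
    push_cast
    exact ⟨by linarith [hy.1], hy.2⟩
  rw [sawtooth, hceil]
  push_cast
  ring

theorem integral_two_mul_add_one_sub_two_mul (a : ℝ) :
    ∫ y in a..(a + 1), (2 * a + 1 - 2 * y) = 0 := by
  rw [intervalIntegral.integral_sub (by simp) (Continuous.intervalIntegrable (by fun_prop) _ _),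
    intervalIntegral.integral_const, intervalIntegral.integral_const_mul, integral_id, smul_eq_mul]
  ring

theorem norm_integral_sawtooth_mul_le {κ κ' : ℝ → ℂ} (hκ : ∀ y, HasDerivAt κ (κ' y) y) (j : ℕ)
    {B : ℝ} (hB : ∀ y ∈ Icc (j : ℝ) (j + 1), ‖κ' y‖ ≤ B) :
    ‖∫ y in (j : ℝ)..(j + 1), (sawtooth y : ℂ) * κ y‖ ≤ B := by
  have hc : Continuous κ := continuous_iff_continuousAt.2 fun y ↦ (hκ y).continuousAt
  have hj : (j : ℝ) ≤ j + 1 := by linarith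
  have hmean : ∫ y in (j : ℝ)..(j + 1), ((2 * j + 1 - 2 * y : ℝ) : ℂ) * κ j = 0 := by
    rw [intervalIntegral.integral_mul_const, intervalIntegral.integral_ofReal,
      integral_two_mul_add_one_sub_two_mul, Complex.ofReal_zero, zero_mul]
  have hcentre : ∫ y in (j : ℝ)..(j + 1), (sawtooth y : ℂ) * κ y =
      ∫ y in (j : ℝ)..(j + 1), ((2 * j + 1 - 2 * y : ℝ) : ℂ) * (κ y - κ j) := by
    simp only [mul_sub]
    rw [intervalIntegral.integral_sub (Continuous.intervalIntegrable (by fun_prop) _ _)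
      (Continuous.intervalIntegrable (by fun_prop) _ _), hmean, sub_zero]
    refine intervalIntegral.integral_congr_ae (.of_forall fun y hy ↦ ?_)
    rw [uIoc_of_le hj] at hy
    rw [sawtooth_of_mem_Ioc hy]
  have hB0 : 0 ≤ B := (norm_nonneg _).trans (hB j ⟨le_rfl, hj⟩)
  have hpoint (y : ℝ) (hy : y ∈ uIoc (j : ℝ) (j + 1)) :
      ‖((2 * j + 1 - 2 * y : ℝ) : ℂ) * (κ y - κ j)‖ ≤ B := by
    rw [uIoc_of_le hj] at hy
    have hlip : ‖κ y - κ j‖ ≤ B * ‖y - (j : ℝ)‖ :=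
      (convex_Icc (j : ℝ) (j + 1)).norm_image_sub_le_of_norm_hasDerivWithin_le
        (fun x _ ↦ (hκ x).hasDerivWithinAt) hB ⟨le_rfl, hj⟩ ⟨hy.1.le, hy.2⟩
    have hlen : ‖y - (j : ℝ)‖ ≤ 1 := by
      rw [norm_of_nonneg (sub_nonneg.2 hy.1.le)]
      linarith [hy.2]
    rw [norm_mul, Complex.norm_real, ← sawtooth_of_mem_Ioc hy]
    exact (mul_le_of_le_one_left (norm_nonneg _) (abs_sawtooth_le_one y)).trans
      (hlip.trans (mul_le_of_le_one_right hB0 hlen))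
  simpa [hcentre] using intervalIntegral.norm_integral_le_of_norm_le_const hpoint

theorem norm_integral_Ioi_sawtooth_mul_le {κ κ' : ℝ → ℂ} (hκ : ∀ y, HasDerivAt κ (κ' y) y)
    (hint : IntegrableOn (fun y ↦ (sawtooth y : ℂ) * κ y) (Ioi 0)) {b : ℕ → ℝ} (hb : Summable b)
    (hbound : ∀ j : ℕ, ∀ y ∈ Icc (j : ℝ) (j + 1), ‖κ' y‖ ≤ b j) :
    ‖∫ y in Ioi (0 : ℝ), (sawtooth y : ℂ) * κ y‖ ≤ ∑' j, b j := by
  refine le_of_tendsto (intervalIntegral_tendsto_integral_Ioi 0 hint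
    tendsto_natCast_atTop_atTop).norm (.of_forall fun n ↦ ?_)
  have hpieces := intervalIntegral.sum_integral_adjacent_intervals (n := n)
    (a := fun k : ℕ ↦ (k : ℝ)) (f := fun y ↦ (sawtooth y : ℂ) * κ y) (μ := volume) fun k _ ↦ by
      rw [intervalIntegrable_iff_integrableOn_Ioc_of_le (by simp)]
      exact hint.mono_set fun y hy ↦ (Nat.cast_nonneg k).trans_lt hy.1
  simp only [Nat.cast_zero, Nat.cast_succ] at hpieces
  rw [← hpieces]
  refine (norm_sum_le _ _).trans ((Finset.sum_le_sum fun j _ ↦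
    norm_integral_sawtooth_mul_le hκ j (hbound j)).trans (hb.sum_le_tsum _ fun j _ ↦ ?_))
  exact (norm_nonneg _).trans (hbound j j ⟨le_rfl, by linarith⟩)

theorem exp_neg_le_rpow_neg_three_halves {x : ℝ} (hx : 0 < x) : exp (-x) ≤ x ^ (-(3 / 2) : ℝ) := by
  rw [exp_neg, rpow_neg hx.le]
  refine inv_anti₀ (by positivity) ?_
  have hpow : x ^ (3 / 2 : ℝ) = x * √x := by
    rw [sqrt_eq_rpow, show (3 / 2 : ℝ) = 1 + 1 / 2 by norm_num, rpow_add hx, rpow_one]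
  have hsqrt : √x ≤ 1 + x / 2 := sqrt_le_iff.2 ⟨by positivity, by nlinarith [sq_nonneg x]⟩
  rw [hpow]
  nlinarith [quadratic_le_exp_of_nonneg hx.le]

theorem exp_neg_mul_div_cube_le {σ t a b : ℝ} (hσ : 0 < σ) (ht : 0 < t) (ha : 0 < a)
    (hat : a ≤ t ^ 2) (hb : 0 < b) (hbt : b ≤ t ^ 2) :
    exp (-(σ * t)) / t ^ 3 ≤
      σ ^ (-(3 / 2) : ℝ) * (a ^ (-(9 / 8) : ℝ) * b ^ (-(9 / 8) : ℝ)) := by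
  have hpow : (t ^ 2) ^ (-(9 / 8) : ℝ) = t ^ (-(9 / 4) : ℝ) := by
    rw [← rpow_natCast, ← rpow_mul ht.le]
    norm_num
  have ha' := hpow ▸ rpow_le_rpow_of_nonpos ha hat (by norm_num : (-(9 / 8) : ℝ) ≤ 0)
  have hb' := hpow ▸ rpow_le_rpow_of_nonpos hb hbt (by norm_num : (-(9 / 8) : ℝ) ≤ 0)
  calc exp (-(σ * t)) / t ^ 3 ≤ (σ * t) ^ (-(3 / 2) : ℝ) / t ^ 3 := by
        gcongr
        exact exp_neg_le_rpow_neg_three_halves (by positivity)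
    _ = σ ^ (-(3 / 2) : ℝ) * (t ^ (-(9 / 4) : ℝ) * t ^ (-(9 / 4) : ℝ)) := by
        rw [mul_rpow hσ.le ht.le, mul_div_assoc, ← rpow_natCast t 3, ← rpow_sub ht, ← rpow_add ht]
        norm_num
    _ ≤ _ := by gcongr

/-- The radius `(y² + m²)^{1/4}` of the Cygan–Korányi ball whose fibre above a point `z` with
`|z|² = m` has half-length `y`. -/
noncomputable def fibreRadius (m y : ℝ) : ℝ := √√(y ^ 2 + m ^ 2)

variable {m : ℝ}

theorem fibreRadius_pos (hm : 0 < m) (y : ℝ) : 0 < fibreRadius m y := by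
  unfold fibreRadius
  positivity

theorem fibreRadius_sq (m y : ℝ) : fibreRadius m y ^ 2 = √(y ^ 2 + m ^ 2) :=
  sq_sqrt (sqrt_nonneg _)

theorem fibreRadius_pow_four (m y : ℝ) : fibreRadius m y ^ 4 = y ^ 2 + m ^ 2 := by
  rw [show fibreRadius m y ^ 4 = (fibreRadius m y ^ 2) ^ 2 by ring, fibreRadius_sq,
    sq_sqrt (by positivity)]

theorem lt_fibreRadius_sq (hm : 0 < m) {y : ℝ} (hy : 0 < y) : m < fibreRadius m y ^ 2 := by
  rw [fibreRadius_sq, lt_sqrt hm.le]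
  exact lt_add_of_pos_left _ (pow_pos hy 2)

theorem hasDerivAt_fibreRadius (hm : 0 < m) (y : ℝ) :
    HasDerivAt (fibreRadius m) (y / (2 * fibreRadius m y ^ 3)) y := by
  have hinner : HasDerivAt (fun y : ℝ ↦ y ^ 2 + m ^ 2) (2 * y) y := by
    simpa using (hasDerivAt_pow 2 y).add_const (m ^ 2)
  refine ((hinner.sqrt (by positivity)).sqrt (by positivity)).congr_deriv ?_
  change 2 * y / (2 * √(y ^ 2 + m ^ 2)) / (2 * fibreRadius m y) = _
  have := fibreRadius_pos hm y
  rw [← fibreRadius_sq]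
  field_simp

theorem image_fibreRadius_Ioi (hm : 0 < m) : fibreRadius m '' Ioi 0 = Ioi √m := by
  ext t
  refine ⟨?_, fun ht ↦ ?_⟩
  · rintro ⟨y, hy, rfl⟩
    exact (sqrt_lt' (fibreRadius_pos hm y)).2 (lt_fibreRadius_sq hm hy)
  · have ht0 : 0 < t := (sqrt_nonneg m).trans_lt ht
    have hmt : m < t ^ 2 := (sqrt_lt' ht0).1 ht
    have hpos : 0 < t ^ 4 - m ^ 2 := by nlinarith
    refine ⟨√(t ^ 4 - m ^ 2), sqrt_pos.2 hpos, ?_⟩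
    rw [fibreRadius, sq_sqrt hpos.le, sub_add_cancel, show t ^ 4 = (t ^ 2) ^ 2 by ring,
      sqrt_sq (sq_nonneg t), sqrt_sq ht0.le]

theorem injOn_fibreRadius (m : ℝ) : InjOn (fibreRadius m) (Ioi 0) := by
  intro x (hx : 0 < x) y (hy : 0 < y) h
  have h4 := fibreRadius_pow_four m x
  rw [h, fibreRadius_pow_four, add_left_inj] at h4
  exact ((pow_left_inj₀ hy.le hx.le two_ne_zero).1 h4).symm

/-- The weight `e^{-st} t⁻¹ dt` in the variable `y`, where `t = fibreRadius m y`. -/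
noncomputable def fibreKernel (m : ℝ) (s : ℂ) (y : ℝ) : ℂ :=
  ((y / (2 * fibreRadius m y ^ 4) : ℝ) : ℂ) * Complex.exp (-(s * fibreRadius m y))

/-- The derivative of `fibreKernel m s`. -/
noncomputable def fibreKernelDeriv (m : ℝ) (s : ℂ) (y : ℝ) : ℂ :=
  (((1 / (2 * fibreRadius m y ^ 4) - y ^ 2 / fibreRadius m y ^ 8 : ℝ) : ℂ) -
    s * ((y ^ 2 / (4 * fibreRadius m y ^ 7) : ℝ) : ℂ)) * Complex.exp (-(s * fibreRadius m y))

theorem hasDerivAt_fibreKernel (hm : 0 < m) (s : ℂ) (y : ℝ) :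
    HasDerivAt (fibreKernel m s) (fibreKernelDeriv m s y) y := by
  have hρ := fibreRadius_pos hm y
  have hradius := hasDerivAt_fibreRadius hm y
  have hquot : HasDerivAt (fun y ↦ y / (2 * fibreRadius m y ^ 4))
      (1 / (2 * fibreRadius m y ^ 4) - y ^ 2 / fibreRadius m y ^ 8) y := by
    refine ((hasDerivAt_id' y).fun_div ((hradius.fun_pow 4).const_mul 2)
      (by positivity)).congr_deriv ?_
    field_simp
    norm_num
    ring
  have hexp : HasDerivAt (fun y ↦ Complex.exp (-(s * fibreRadius m y)))
      (Complex.exp (-(s * fibreRadius m y)) *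
        (-(s * ((y / (2 * fibreRadius m y ^ 3) : ℝ) : ℂ)))) y :=
    (hradius.ofReal_comp.const_mul s).neg.cexp
  refine (hquot.ofReal_comp.mul hexp).congr_deriv ?_
  have hρ' : (fibreRadius m y : ℂ) ≠ 0 := by exact_mod_cast hρ.ne'
  rw [fibreKernelDeriv]
  push_cast
  field_simp
  ring

theorem norm_fibreKernelDeriv_coeff_le {ρ y : ℝ} (hρ : 1 ≤ ρ) (hy : y ^ 2 ≤ ρ ^ 4) (s : ℂ) :
    ‖((1 / (2 * ρ ^ 4) - y ^ 2 / ρ ^ 8 : ℝ) : ℂ) - s * ((y ^ 2 / (4 * ρ ^ 7) : ℝ) : ℂ)‖ ≤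
      (2 + ‖s‖) / ρ ^ 3 := by
  have hρ0 : 0 < ρ := one_pos.trans_le hρ
  have hfirst : 1 / (2 * ρ ^ 4) ≤ 1 / ρ ^ 3 := by
    refine one_div_le_one_div_of_le (by positivity) ?_
    linarith [pow_le_pow_right₀ hρ (by norm_num : 3 ≤ 4), pow_pos hρ0 4]
  have hsecond : y ^ 2 / ρ ^ 8 ≤ 1 / ρ ^ 3 :=
    calc y ^ 2 / ρ ^ 8 ≤ ρ ^ 4 / ρ ^ 8 := by gcongr
      _ = 1 / ρ ^ 4 := by field_simp
      _ ≤ 1 / ρ ^ 3 := by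
        gcongr
        norm_num
  have hthird : y ^ 2 / (4 * ρ ^ 7) ≤ 1 / ρ ^ 3 :=
    calc y ^ 2 / (4 * ρ ^ 7) ≤ ρ ^ 4 / (1 * ρ ^ 7) := by gcongr; norm_num
      _ = 1 / ρ ^ 3 := by field_simp
  have hfirst0 : 0 ≤ 1 / (2 * ρ ^ 4) := by positivity
  have hsecond0 : 0 ≤ y ^ 2 / ρ ^ 8 := by positivity
  have hdiff : |1 / (2 * ρ ^ 4) - y ^ 2 / ρ ^ 8| ≤ 2 * (1 / ρ ^ 3) := by
    rw [abs_le]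
    constructor <;> linarith
  refine (norm_sub_le _ _).trans ?_
  rw [norm_mul, Complex.norm_real, Complex.norm_real, norm_eq_abs,
    norm_of_nonneg (by positivity : 0 ≤ y ^ 2 / (4 * ρ ^ 7))]
  calc _ ≤ 2 * (1 / ρ ^ 3) + ‖s‖ * (1 / ρ ^ 3) := by gcongr
    _ = _ := by ring

theorem norm_fibreKernelDeriv_le (hm : 1 ≤ m) {s : ℂ} (hs : 0 < s.re) {j y : ℝ} (hj : 0 ≤ j)
    (hjy : j ≤ y) :
    ‖fibreKernelDeriv m s y‖ ≤ (2 + ‖s‖) * (s.re ^ (-(3 / 2) : ℝ) *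
      (m ^ (-(9 / 8) : ℝ) * ((j + 1) / 2) ^ (-(9 / 8) : ℝ))) := by
  have hm0 : 0 < m := one_pos.trans_le hm
  have hρ := fibreRadius_pos hm0 y
  have h4 := fibreRadius_pow_four m y
  have hsq := fibreRadius_sq m y
  have hmρ : m ≤ fibreRadius m y ^ 2 := hsq ▸ le_sqrt_of_sq_le (by nlinarith)
  have hjy2 : j ^ 2 ≤ y ^ 2 := by gcongr
  have hm2 : 1 ≤ m ^ 2 := one_le_pow₀ hm
  have hjρ : (j + 1) / 2 ≤ fibreRadius m y ^ 2 :=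
    hsq ▸ le_sqrt_of_sq_le (by nlinarith [sq_nonneg (j - 1)])
  have hρ1 : 1 ≤ fibreRadius m y := (one_le_sq_iff₀ hρ.le).1 (hm.trans hmρ)
  rw [fibreKernelDeriv, norm_mul, norm_cexp_neg_mul_ofReal]
  calc _ ≤ (2 + ‖s‖) / fibreRadius m y ^ 3 * exp (-(s.re * fibreRadius m y)) := by
        gcongr
        exact norm_fibreKernelDeriv_coeff_le hρ1 (by nlinarith) s
    _ = (2 + ‖s‖) * (exp (-(s.re * fibreRadius m y)) / fibreRadius m y ^ 3) := by ring
    _ ≤ _ := by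
        gcongr
        exact exp_neg_mul_div_cube_le hs hρ hm0 hmρ (by positivity) hjρ

theorem summable_half_succ_rpow : Summable fun j : ℕ ↦ (((j : ℝ) + 1) / 2) ^ (-(9 / 8) : ℝ) := by
  have h := (summable_nat_add_iff 1).2
    ((Real.summable_nat_rpow (p := -(9 / 8))).2 (by norm_num))
  refine (h.div_const (2 ^ (-(9 / 8) : ℝ))).congr fun j ↦ ?_
  rw [Nat.cast_succ, div_rpow (by positivity) zero_le_two]

theorem measurable_fibreError (z : ℤ × ℤ) : Measurable (fibreError z) :=
  Measurable.ite (measurableSet_lt measurable_const (by fun_prop))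
    (measurable_sawtooth.comp (by fun_prop)) measurable_const

theorem abs_fibreError_div_le_one {z : ℤ × ℤ} (hz : z ≠ 0) {t : ℝ} (ht : 0 < t) :
    |fibreError z t / t| ≤ 1 := by
  rcases le_or_gt (t ^ 2) (sqNorm z) with h | h
  · simp [fibreError_of_sq_le h]
  · rw [abs_div, abs_of_pos ht, div_le_one ht]
    exact (abs_fibreError_le_one z t).trans
      ((one_le_sq_iff₀ ht.le).1 ((one_le_sqNorm hz).trans h.le))

theorem laplaceIntegrable_fibreError_div {z : ℤ × ℤ} (hz : z ≠ 0) :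
    LaplaceIntegrable fun t ↦ fibreError z t / t :=
  hasLaplaceAmplitude_one.laplaceIntegrable.of_abs_le
    ((measurable_fibreError z).div measurable_id) fun _ ht ↦ abs_fibreError_div_le_one hz ht

theorem deriv_fibreRadius_smul_fibreError_div {z : ℤ × ℤ} (hz : z ≠ 0) (s : ℂ) {y : ℝ}
    (hy : 0 < y) :
    |y / (2 * fibreRadius (sqNorm z) y ^ 3)| •
        (((fibreError z (fibreRadius (sqNorm z) y) / fibreRadius (sqNorm z) y : ℝ) : ℂ) *
          Complex.exp (-(s * fibreRadius (sqNorm z) y))) =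
      (sawtooth y : ℂ) * fibreKernel (sqNorm z) s y := by
  have hm : 0 < sqNorm z := one_pos.trans_le (one_le_sqNorm hz)
  have hρ := fibreRadius_pos hm y
  rw [fibreError, if_pos (lt_fibreRadius_sq hm hy), fibreRadius_pow_four, add_sub_cancel_right,
    sqrt_sq hy.le, abs_of_pos (by positivity), Complex.real_smul, fibreKernel]
  have hρ' : (fibreRadius (sqNorm z) y : ℂ) ≠ 0 := by exact_mod_cast hρ.ne'
  push_cast
  field_simp

theorem integrableOn_sawtooth_mul_fibreKernel {z : ℤ × ℤ} (hz : z ≠ 0) {s : ℂ} (hs : 0 < s.re) :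
    IntegrableOn (fun y ↦ (sawtooth y : ℂ) * fibreKernel (sqNorm z) s y) (Ioi 0) := by
  have hm : 0 < sqNorm z := one_pos.trans_le (one_le_sqNorm hz)
  have h := ((laplaceIntegrable_fibreError_div hz).integrableOn hs).mono_set
    (Ioi_subset_Ioi (sqrt_nonneg (sqNorm z)))
  rw [← image_fibreRadius_Ioi hm, integrableOn_image_iff_integrableOn_abs_deriv_smul
    measurableSet_Ioi (fun y _ ↦ (hasDerivAt_fibreRadius hm y).hasDerivWithinAt)
    (injOn_fibreRadius _)] at h
  exact h.congr_fun (fun y hy ↦ deriv_fibreRadius_smul_fibreError_div hz s hy) measurableSet_Ioi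

theorem laplaceTransform_fibreError_div {z : ℤ × ℤ} (hz : z ≠ 0) (s : ℂ) :
    laplaceTransform (fun t ↦ fibreError z t / t) s =
      ∫ y in Ioi (0 : ℝ), (sawtooth y : ℂ) * fibreKernel (sqNorm z) s y := by
  have hm : 0 < sqNorm z := one_pos.trans_le (one_le_sqNorm hz)
  rw [laplaceTransform, setIntegral_eq_of_subset_of_forall_sdiff_eq_zero measurableSet_Ioi
    (Ioi_subset_Ioi (sqrt_nonneg (sqNorm z))) fun t ht ↦ ?_, ← image_fibreRadius_Ioi hm,
    integral_image_eq_integral_abs_deriv_smul measurableSet_Ioi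
      (fun y _ ↦ (hasDerivAt_fibreRadius hm y).hasDerivWithinAt) (injOn_fibreRadius _)]
  · exact setIntegral_congr_fun measurableSet_Ioi
      fun y hy ↦ deriv_fibreRadius_smul_fibreError_div hz s hy
  · have hle : t ^ 2 ≤ sqNorm z := (le_sqrt' ht.1).1 (not_lt.1 ht.2)
    simp [fibreError_of_sq_le hle]

theorem norm_laplaceTransform_fibreError_div_le {z : ℤ × ℤ} (hz : z ≠ 0) {s : ℂ}
    (hs : 0 < s.re) :
    ‖laplaceTransform (fun t ↦ fibreError z t / t) s‖ ≤
      (2 + ‖s‖) * (s.re ^ (-(3 / 2) : ℝ) * (sqNorm z ^ (-(9 / 8) : ℝ) *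
        ∑' j : ℕ, (((j : ℝ) + 1) / 2) ^ (-(9 / 8) : ℝ))) := by
  have hm := one_le_sqNorm hz
  rw [laplaceTransform_fibreError_div hz]
  simp only [← tsum_mul_left]
  exact norm_integral_Ioi_sawtooth_mul_le (hasDerivAt_fibreKernel (one_pos.trans_le hm) s)
    (integrableOn_sawtooth_mul_fibreKernel hz hs)
    (((summable_half_succ_rpow.mul_left _).mul_left _).mul_left _)
    fun j y hy ↦ norm_fibreKernelDeriv_le hm hs j.cast_nonneg hy.1

theorem abs_fibreError_le_pow_four_mul {z : ℤ × ℤ} (hz : z ≠ 0) (t : ℝ) :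
    |fibreError z t| ≤ t ^ 4 * (sqNorm z ^ 2)⁻¹ := by
  have hm := one_le_sqNorm hz
  rcases le_or_gt (t ^ 2) (sqNorm z) with h | h
  · rw [fibreError_of_sq_le h, abs_zero]
    positivity
  · refine (abs_fibreError_le_one z t).trans ?_
    rw [← div_eq_mul_inv, le_div_iff₀ (by positivity)]
    nlinarith

theorem abs_ite_fibreError_le (z : ℤ × ℤ) (t : ℝ) :
    |if z = 0 then 0 else fibreError z t| ≤ t ^ 4 * (sqNorm z ^ 2)⁻¹ := by
  split_ifs with hz
  · rw [abs_zero]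
    positivity
  · exact abs_fibreError_le_pow_four_mul hz t

theorem abs_ite_fibreError_div_le (z : ℤ × ℤ) {t : ℝ} (ht : 0 < t) :
    |(if z = 0 then 0 else fibreError z t) / t| ≤ (sqNorm z ^ 2)⁻¹ * t ^ 3 := by
  rw [abs_div, abs_of_pos ht, div_le_iff₀ ht]
  exact (abs_ite_fibreError_le z t).trans_eq (by ring)

theorem measurable_ite_fibreError (z : ℤ × ℤ) :
    Measurable fun t ↦ if z = 0 then 0 else fibreError z t := by
  split_ifs
  exacts [measurable_const, measurable_fibreError z]

theorem fibreErrorSum_div (t : ℝ) :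
    fibreErrorSum t / t = ∑' z : ℤ × ℤ, (if z = 0 then 0 else fibreError z t) / t :=
  tsum_div_const.symm

theorem abs_fibreErrorSum_div_le {t : ℝ} (ht : 0 < t) :
    |fibreErrorSum t / t| ≤ (∑' z, (sqNorm z ^ 2)⁻¹) * t ^ 3 := by
  rw [fibreErrorSum_div, ← norm_eq_abs]
  exact tsum_of_norm_bounded (summable_inv_sqNorm_sq.hasSum.mul_right _)
    fun z ↦ abs_ite_fibreError_div_le z ht

theorem laplaceIntegrable_fibreErrorSum_div : LaplaceIntegrable fun t ↦ fibreErrorSum t / t :=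
  ((laplaceIntegrable_pow 3).const_mul _).of_abs_le
    ((Measurable.tsum measurable_ite_fibreError).div measurable_id)
    fun _ ht ↦ abs_fibreErrorSum_div_le ht

theorem norm_laplaceTransform_fibreErrorSum_div_le {s : ℂ} (hs : 0 < s.re) :
    ‖laplaceTransform (fun t ↦ fibreErrorSum t / t) s‖ ≤
      (2 + ‖s‖) * (s.re ^ (-(3 / 2) : ℝ) * ((∑' z, sqNorm z ^ (-(9 / 8) : ℝ)) *
        ∑' j : ℕ, (((j : ℝ) + 1) / 2) ^ (-(9 / 8) : ℝ))) := by
  have hmeas (z : ℤ × ℤ) : Measurable fun t ↦ (if z = 0 then 0 else fibreError z t) / t :=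
    (measurable_ite_fibreError z).div measurable_id
  have hsum := hasSum_laplaceTransform hmeas summable_inv_sqNorm_sq (laplaceIntegrable_pow 3)
    (fun z t ht ↦ abs_ite_fibreError_div_le z ht) hs
  simp only [← fibreErrorSum_div] at hsum
  rw [← hsum.tsum_eq]
  refine tsum_of_norm_bounded ((((summable_sqNorm_rpow (by norm_num)).hasSum.mul_right
    _).mul_left _).mul_left _) fun z ↦ ?_
  rcases eq_or_ne z 0 with rfl | hz
  · simp [laplaceTransform, sqNorm_zero]
  · simpa only [if_neg hz] using norm_laplaceTransform_fibreError_div_le hz hs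

theorem hasLaplaceAmplitude_fibreErrorSum_div :
    HasLaplaceAmplitude (fun t ↦ fibreErrorSum t / t) fun _ ↦ 0 where
  laplaceIntegrable := laplaceIntegrable_fibreErrorSum_div
  tendsto l := by
    set G := (∑' z, sqNorm z ^ (-(9 / 8) : ℝ)) * ∑' j : ℕ, (((j : ℝ) + 1) / 2) ^ (-(9 / 8) : ℝ)
      with hG
    have hG0 : 0 ≤ G := mul_nonneg (tsum_nonneg fun z ↦ rpow_nonneg (sqNorm_nonneg z) _)
      (tsum_nonneg fun j ↦ by positivity)
    have hlim : Tendsto (fun σ : ℝ ↦ (3 + 2 * π * |l|) * G * √σ) (𝓝[>] 0) (𝓝 0) :=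
      tendsto_nhdsWithin_of_tendsto_nhds (Continuous.tendsto' (by fun_prop) _ _ (by simp))
    rw [Complex.ofReal_zero]
    refine squeeze_zero_norm' ?_ hlim
    filter_upwards [Ioo_mem_nhdsGT zero_lt_one] with σ hσ
    have hσ0 : 0 < σ := hσ.1
    have hre := re_ofReal_add_two_pi_mul_I σ l
    have hnorm := norm_ofReal_add_two_pi_mul_I_le l hσ0 hσ.2.le
    have hbound := norm_laplaceTransform_fibreErrorSum_div_le
      (s := σ + 2 * π * l * Complex.I) (hre.symm ▸ hσ0)
    rw [hre, ← hG] at hbound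
    have hpow : σ ^ 2 * σ ^ (-(3 / 2) : ℝ) = √σ := by
      rw [sqrt_eq_rpow, ← rpow_natCast, ← rpow_add hσ0]
      norm_num
    rw [norm_mul, norm_pow, Complex.norm_real, norm_of_nonneg hσ0.le]
    calc _ ≤ σ ^ 2 * ((2 + (1 + 2 * π * |l|)) * (σ ^ (-(3 / 2) : ℝ) * G)) := by
          gcongr
          exact hbound.trans (by gcongr)
      _ = (3 + 2 * π * |l|) * G * (σ ^ 2 * σ ^ (-(3 / 2) : ℝ)) := by ring
      _ = _ := by rw [hpow]

end FibreError

section RieszProduct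

theorem exists_eq_single_of_forall_eq_zero_or_eq_zero {ι : Type*} [DecidableEq ι] {x : ι → ℤ}
    (hx0 : x ≠ 0) (hx : ∀ i j, i ≠ j → x i = 0 ∨ x j = 0) :
    ∃ i, x i ≠ 0 ∧ x = Pi.single i (x i) := by
  obtain ⟨i, hi⟩ := Function.ne_iff.1 hx0
  refine ⟨i, hi, funext fun j ↦ ?_⟩
  obtain rfl | hj := eq_or_ne j i
  · simp
  · rw [Pi.single_eq_of_ne hj, (hx j i hj).resolve_right hi]

variable {ι : Type*} [Fintype ι] {e : ℝ}

/-- The Fourier coefficients of `1 - e cos θ`, in the range `-1 ≤ k ≤ 1` where they live. -/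
noncomputable def rieszCoeff (e : ℝ) (k : ℤ) : ℝ := if k = 0 then 1 else -e / 2

theorem one_sub_mul_cos_eq_sum (e θ : ℝ) :
    ((1 - e * cos θ : ℝ) : ℂ) =
      ∑ k ∈ ({-1, 0, 1} : Finset ℤ), rieszCoeff e k * Complex.exp (-(k * θ * Complex.I)) := by
  rw [Finset.sum_insert (by decide), Finset.sum_insert (by decide), Finset.sum_singleton]
  simp only [rieszCoeff]
  push_cast
  rw [Complex.cos]
  norm_num
  ring

/-- The frequency `∑ xᵢ θᵢ` of the character indexed by `x` in the expansion of the Riesz product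
`∏ (1 - e cos (2π θᵢ t))`. -/
noncomputable def rieszFreq (θ : ι → ℝ) (x : ι → ℤ) : ℝ := ∑ i, x i * θ i

theorem rieszFreq_zero (θ : ι → ℝ) : rieszFreq θ 0 = 0 := by simp [rieszFreq]

variable [DecidableEq ι]

theorem rieszFreq_single (θ : ι → ℝ) (i : ι) (k : ℤ) :
    rieszFreq θ (Pi.single i k) = k * θ i := by
  simp [rieszFreq, Pi.single_apply]

theorem prod_rieszCoeff_single (e : ℝ) (i : ι) {k : ℤ} (hk : k ≠ 0) :
    ∏ j, rieszCoeff e ((Pi.single i k : ι → ℤ) j) = -e / 2 := by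
  rw [Finset.prod_eq_single i]
  · simp [rieszCoeff, hk]
  · intro j _ hj
    simp [rieszCoeff, hj]
  · simp

theorem prod_one_sub_mul_cos_eq_sum (e : ℝ) (θ : ι → ℝ) (t : ℝ) :
    ((∏ i, (1 - e * cos (2 * π * θ i * t)) : ℝ) : ℂ) =
      ∑ x ∈ Fintype.piFinset fun _ : ι ↦ ({-1, 0, 1} : Finset ℤ),
        ((∏ i, rieszCoeff e (x i) : ℝ) : ℂ) *
          Complex.exp (-(2 * π * rieszFreq θ x * Complex.I * t)) := by
  rw [Complex.ofReal_prod]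
  simp only [one_sub_mul_cos_eq_sum, Finset.prod_univ_sum]
  refine Finset.sum_congr rfl fun x _ ↦ ?_
  rw [Finset.prod_mul_distrib, ← Complex.exp_sum, Complex.ofReal_prod, Finset.sum_neg_distrib,
    rieszFreq]
  push_cast
  simp only [Finset.mul_sum, Finset.sum_mul]
  congr 3
  exact Finset.sum_congr rfl fun i _ ↦ by ring

theorem sum_piFinset_eq_of_eq_zero {g : (ι → ℤ) → ℝ}
    (hg : ∀ x i j, i ≠ j → x i ≠ 0 → x j ≠ 0 → g x = 0) :
    ∑ x ∈ Fintype.piFinset (fun _ : ι ↦ ({-1, 0, 1} : Finset ℤ)), g x =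
      g 0 + ∑ i, (g (Pi.single i (-1)) + g (Pi.single i 1)) := by
  have hsub : insert 0 ((Finset.univ ×ˢ ({-1, 1} : Finset ℤ)).image fun a : ι × ℤ ↦
      Pi.single a.1 a.2) ⊆ Fintype.piFinset fun _ : ι ↦ ({-1, 0, 1} : Finset ℤ) := by
    simp only [Finset.insert_subset_iff, Finset.image_subset_iff, Fintype.mem_piFinset]
    refine ⟨by simp, fun a ha j ↦ ?_⟩
    obtain ha | ha : a.2 = -1 ∨ a.2 = 1 := by simpa using ha
    all_goals rw [ha, Pi.single_apply]; split_ifs <;> simp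
  have hinj : Set.InjOn (fun a : ι × ℤ ↦ (Pi.single a.1 a.2 : ι → ℤ))
      (Finset.univ ×ˢ ({-1, 1} : Finset ℤ) : Finset (ι × ℤ)) := by
    rintro ⟨i, k⟩ hk ⟨j, l⟩ - (h : (Pi.single i k : ι → ℤ) = Pi.single j l)
    have hk0 : k ≠ 0 := by
      rintro rfl
      simp at hk
    have hkl := congrFun h i
    rw [Pi.single_eq_same, Pi.single_apply] at hkl
    obtain rfl : i = j := by
      by_contra hij
      exact hk0 (hkl.trans (if_neg hij))
    rw [hkl, if_pos rfl]
  rw [← Finset.sum_subset hsub fun x hx hx' ↦ ?_, Finset.sum_insert, Finset.sum_image hinj,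
    Finset.sum_product]
  · simp
  · simp only [Finset.mem_image, not_exists, not_and]
    intro a ha h
    have := Pi.single_eq_zero_iff.1 h
    simp [this] at ha
  · by_contra hgx
    obtain ⟨hx0, hxi⟩ := not_or.1 (Finset.mem_insert.not.1 hx')
    obtain ⟨i, hi, hsingle⟩ := exists_eq_single_of_forall_eq_zero_or_eq_zero hx0 fun i j hij ↦ by
      by_contra! h
      exact hgx (hg x i j hij h.1 h.2)
    refine hxi (Finset.mem_image.2 ⟨(i, x i), ?_, hsingle.symm⟩)
    have := Fintype.mem_piFinset.1 hx i
    simp only [Finset.mem_insert, Finset.mem_singleton, Finset.mem_product, Finset.mem_univ,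
      true_and] at this ⊢
    tauto

omit [DecidableEq ι] in
theorem HasLaplaceAmplitude.mul_sum_le {f L : ℝ → ℝ} (hf : HasLaplaceAmplitude f L)
    (hf0 : ∀ t, 0 < t → 0 ≤ f t) (he : |e| ≤ 1) {θ : ι → ℝ} (heven : ∀ l, L (-l) = L l)
    (hL : ∀ x i j, i ≠ j → x i ≠ 0 → x j ≠ 0 → L (rieszFreq θ x) = 0) :
    e * ∑ i, L (θ i) ≤ L 0 := by
  classical
  have hnonneg (t : ℝ) : 0 ≤ ∏ i, (1 - e * cos (2 * π * θ i * t)) := by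
    refine Finset.prod_nonneg fun i _ ↦ sub_nonneg.2 ((le_abs_self _).trans ?_)
    rw [abs_mul]
    exact mul_le_one₀ he (abs_nonneg _) (abs_cos_le_one _)
  have hsum := hf.sum_mul_nonneg hf0 hnonneg (prod_one_sub_mul_cos_eq_sum e θ)
  rw [sum_piFinset_eq_of_eq_zero fun x i j hij hi hj ↦ by rw [hL x i j hij hi hj, mul_zero]] at hsum
  have hpair (i : ι) : (-e / 2 * L (-θ i) + -e / 2 * L (θ i)) = -(e * L (θ i)) := by
    rw [heven]
    ring
  simp only [prod_rieszCoeff_single e _ (neg_ne_zero.2 one_ne_zero : (-1 : ℤ) ≠ 0),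
    prod_rieszCoeff_single e _ one_ne_zero, rieszFreq_single, rieszFreq_zero, Int.cast_neg,
    Int.cast_one, neg_one_mul, one_mul, hpair, Finset.sum_neg_distrib, ← Finset.mul_sum] at hsum
  simpa [rieszCoeff] using hsum

end RieszProduct

section Oscillation

theorem chordAmplitude_neg (l : ℝ) : chordAmplitude (-l) = chordAmplitude l := by
  simp only [chordAmplitude, neg_sq]

theorem chordAmplitude_zero : chordAmplitude 0 = 0 := by simp [chordAmplitude]

theorem chordAmplitude_eq_zero {l : ℝ} (hl : ∀ n : ℕ, l ^ 2 ≠ n) : chordAmplitude l = 0 := by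
  have hempty : {z : ℤ × ℤ | sqNorm z = l ^ 2} = ∅ :=
    Set.eq_empty_of_forall_notMem fun z hz ↦ hl _ (hz.symm.trans (sqNorm_eq_natCast z))
  simp [chordAmplitude, hempty]

theorem chordAmplitude_sqrt_le {p : ℕ} (hp : p.Prime) (hp4 : p % 4 ≠ 3) :
    chordAmplitude √p ≤ -(1 / (2 * π * p)) := by
  have := Fact.mk hp
  obtain ⟨a, b, hab⟩ := Nat.Prime.sq_add_sq hp4
  have hmem : ((a, b) : ℤ × ℤ) ∈ {z : ℤ × ℤ | sqNorm z = p} := by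
    rw [Set.mem_ofPred_eq, sqNorm_eq_natCast]
    simp [← hab]
  have hcard : 1 ≤ {z : ℤ × ℤ | sqNorm z = p}.ncard :=
    (Set.ncard_pos ((finite_setOf_sqNorm_le p).subset fun z hz ↦ le_of_eq hz)).2 ⟨_, hmem⟩
  rw [chordAmplitude, sq_sqrt p.cast_nonneg]
  gcongr
  exact_mod_cast hcard

/-- The main part of the error `(N t - π² / 2 * t ^ 4) / t`, accurate up to `O(t)` as `t → ∞`. -/
noncomputable def linearError (t : ℝ) : ℝ := √2 * chordError t + fibreErrorSum t / t

theorem hasLaplaceAmplitude_linearError :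
    HasLaplaceAmplitude linearError fun l ↦ √2 * chordAmplitude l + 0 :=
  (hasLaplaceAmplitude_chordError.const_mul √2).add hasLaplaceAmplitude_fibreErrorSum_div

theorem exists_forall_abs_linearError_le (T : ℝ) :
    ∃ K, ∀ t, 0 < t → t ≤ T → |linearError t| ≤ K := by
  refine ⟨√2 * (chordSum T + 4 * π / 3 * T ^ 3) + (∑' z, (sqNorm z ^ 2)⁻¹) * T ^ 3,
    fun t ht htT ↦ ?_⟩
  have : 0 ≤ ∑' z, (sqNorm z ^ 2)⁻¹ := tsum_nonneg fun z ↦ by positivity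
  have hchord : |chordError t| ≤ chordSum T + 4 * π / 3 * T ^ 3 := by
    refine (abs_sub _ _).trans ?_
    rw [abs_of_nonneg (chordSum_nonneg t), abs_of_nonneg (by positivity)]
    gcongr
    exact chordSum_le_chordSum ht.le htT
  calc |linearError t| ≤ |√2 * chordError t| + |fibreErrorSum t / t| := abs_add_le _ _
    _ ≤ √2 * |chordError t| + (∑' z, (sqNorm z ^ 2)⁻¹) * t ^ 3 := by
      rw [abs_mul, abs_of_nonneg (sqrt_nonneg 2)]
      gcongr
      exact abs_fibreErrorSum_div_le ht
    _ ≤ _ := by gcongr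

theorem mul_linearError_le {e C t : ℝ} (he : |e| = 1) (ht : 1 ≤ t)
    (h : e * ((N t - π ^ 2 / 2 * t ^ 4) / t ^ 2) ≤ C) : e * linearError t ≤ (|C| + 20) * t := by
  have ht0 : 0 < t := one_pos.trans_le ht
  have herror : e * (N t - π ^ 2 / 2 * t ^ 4) ≤ |C| * t ^ 2 := by
    rw [← mul_div_assoc, div_le_iff₀ (by positivity)] at h
    exact h.trans (by gcongr; exact le_abs_self C)
  have hlinear : t * linearError t = √2 * t * chordError t + fibreErrorSum t := by
    unfold linearError
    field_simp
  have hdecomp : |e * (N t - π ^ 2 / 2 * t ^ 4 - t * linearError t)| ≤ 10 * (t ^ 2 + 1) := by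
    rw [abs_mul, he, one_mul, hlinear, ← sub_sub]
    exact abs_N_sub_le ht0
  have hscaled : t * (e * linearError t) ≤ t * ((|C| + 20) * t) := by
    have := (abs_le.1 hdecomp).1
    nlinarith
  exact le_of_mul_le_mul_left hscaled ht0

theorem exists_forall_mul_linearError_le {e C T : ℝ} (he : |e| = 1)
    (h : ∀ t, T < t → e * ((N t - π ^ 2 / 2 * t ^ 4) / t ^ 2) ≤ C) :
    ∃ K, ∀ t, 0 < t → e * linearError t ≤ K * t + K := by
  obtain ⟨K, hK⟩ := exists_forall_abs_linearError_le (max T 1)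
  refine ⟨|K| + (|C| + 20), fun t ht ↦ ?_⟩
  rcases le_or_gt t (max T 1) with htT | htT
  · have hle : e * linearError t ≤ |K| :=
      calc e * linearError t ≤ |e * linearError t| := le_abs_self _
        _ = |linearError t| := by rw [abs_mul, he, one_mul]
        _ ≤ |K| := (hK t ht htT).trans (le_abs_self K)
    have : 0 ≤ (|K| + (|C| + 20)) * t := by positivity
    linarith [abs_nonneg C]
  · obtain ⟨hTt, h1t⟩ := max_lt_iff.1 htT
    have hle := mul_linearError_le he h1t.le (h t hTt)
    have : 0 ≤ |K| * t := by positivity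
    linarith [abs_nonneg C, abs_nonneg K]

theorem rieszFreq_sqrt_sq_ne_natCast {P : Finset ℕ} (hP : ∀ p ∈ P, p.Prime) {x : P → ℤ} {i j : P}
    (hij : i ≠ j) (hi : x i ≠ 0) (hj : x j ≠ 0) (n : ℕ) :
    rieszFreq (fun p : P ↦ √(p : ℕ)) x ^ 2 ≠ n := by
  classical
  intro hn
  rw [rieszFreq] at hn
  have hzero := eq_zero_or_eq_zero_of_sq_sum_mul_sqrt_primes hP
    (f := fun p ↦ if hp : p ∈ P then x ⟨p, hp⟩ else 0) (n := n)
    (by rw [← hn, ← Finset.sum_coe_sort P]; simp) i.2 j.2 (Subtype.coe_ne_coe.2 hij)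
  simp [hi, hj] at hzero

theorem sum_one_div_le_of_mul_linearError_le {e K : ℝ} (he : |e| = 1)
    (hK : ∀ t, 0 < t → e * linearError t ≤ K * t + K) {P : Finset ℕ}
    (hP : ∀ p ∈ P, p.Prime ∧ p % 4 ≠ 3) : √2 / (2 * π) * ∑ p ∈ P, (1 : ℝ) / p ≤ K := by
  have hgap := ((hasLaplaceAmplitude_id.const_mul K).add (hasLaplaceAmplitude_one.const_mul K)).add
    (hasLaplaceAmplitude_linearError.const_mul (-e))
  have hriesz := hgap.mul_sum_le (e := e) (θ := fun p : P ↦ √(p : ℕ))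
    (fun t ht ↦ by linarith [hK t ht]) he.le (fun l ↦ by simp [chordAmplitude_neg])
    fun x i j hij hi hj ↦ by
      have hne := rieszFreq_sqrt_sq_ne_natCast (fun p hp ↦ (hP p hp).1) hij hi hj
      have h0 : rieszFreq (fun p : P ↦ √(p : ℕ)) x ≠ 0 := fun h ↦ hne 0 (by simp [h])
      simp [chordAmplitude_eq_zero hne, h0]
  have hprime (p : P) : √(p : ℕ) ≠ 0 := by simpa using (hP p p.2).1.ne_zero
  simp only [hprime, if_false, if_true, chordAmplitude_zero, mul_zero, mul_one, add_zero, zero_add,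
    ← Finset.mul_sum, P.sum_coe_sort fun p ↦ chordAmplitude √(p : ℕ)] at hriesz
  have hee : e * e = 1 := by rw [← abs_mul_abs_self, he, one_mul]
  calc √2 / (2 * π) * ∑ p ∈ P, (1 : ℝ) / p
      = -(√2 * ∑ p ∈ P, -(1 / (2 * π * p))) := by
        simp only [Finset.mul_sum, ← Finset.sum_neg_distrib]
        exact Finset.sum_congr rfl fun p _ ↦ by ring
    _ ≤ -(√2 * ∑ p ∈ P, chordAmplitude √p) := by
        gcongr with p hp
        exact chordAmplitude_sqrt_le (hP p hp).1 (hP p hp).2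
    _ = e * (-e * (√2 * ∑ p ∈ P, chordAmplitude √p)) := by
        linear_combination (√2 * ∑ p ∈ P, chordAmplitude √p) * hee
    _ ≤ K := hriesz

theorem exists_lt_mul_error {e : ℝ} (he : |e| = 1) (C T : ℝ) :
    ∃ t, T < t ∧ C < e * ((N t - π ^ 2 / 2 * t ^ 4) / t ^ 2) := by
  by_contra! h
  obtain ⟨K, hK⟩ := exists_forall_mul_linearError_le he h
  obtain ⟨P, hP, hlt⟩ := exists_finset_primes_residueClass_lt_sum (q := 4) (a := 1) isUnit_one
    (K / (√2 / (2 * π)))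
  have hle := sum_one_div_le_of_mul_linearError_le he hK fun p hp ↦ ⟨(hP p hp).1, fun h3 ↦ by
    have := (hP p hp).2
    rw [← ZMod.natCast_mod, h3] at this
    exact absurd this (by decide)⟩
  rw [div_lt_iff₀' (by positivity)] at hlt
  exact hle.not_gt hlt

end Oscillation

/-- `limsup_{t→∞} (N(t) − (π²/2)t⁴)/t² = +∞` and
`liminf_{t→∞} (N(t) − (π²/2)t⁴)/t² = −∞`. -/
theorem heisenberg_error_omega_pm :
    (∀ C : ℝ, ∀ T : ℝ, ∃ t : ℝ, T < t ∧
      C < ((N t : ℝ) - Real.pi ^ 2 / 2 * t ^ 4) / t ^ 2) ∧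
    (∀ C : ℝ, ∀ T : ℝ, ∃ t : ℝ, T < t ∧
      ((N t : ℝ) - Real.pi ^ 2 / 2 * t ^ 4) / t ^ 2 < C) := by
  refine ⟨fun C T ↦ ?_, fun C T ↦ ?_⟩
  · simpa using exists_lt_mul_error abs_one C T
  · simpa using exists_lt_mul_error (e := -1) (by simp) (-C) T
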